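/- Fix an integer a ≥ 1 and f ∈ Ḣ^{a−1}_⋄. Then for every θ ∈ Ḣ^a_⋄, the solution of the periodic 2D Navier–Stokes equations satisfies u_θ ∈ C([0,T], Ḣ^a_⋄) ∩ L²([0,T], Ḣ^{a+1}_⋄). Moreover, there exists C = C(T, ν, a, ‖f‖_{Ḣ^{a−1}}) > 0 such that for all θ ∈ Ḣ^a_⋄: sup_{0≤t≤T} ‖u_θ(t)‖²_{Ḣ^a} + ∫₀ᵀ ‖u_θ(t)‖²_{Ḣ^{a+1}} dt ≤ C (1 + ‖θ‖^{2a}_{Ḣ^a}). -/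

import Mathlib

open MeasureTheory Set
open scoped BigOperators

noncomputable section

namespace NS2D

/-- Nonzero Fourier frequencies of the 2D torus `Ω = 𝕋²`. -/
def Freq : Type := {k : ℤ × ℤ // k ≠ 0}

/-- Squared Euclidean modulus `|k|²` of a frequency. -/
def knormSq (k : Freq) : ℝ := (k.1.1 : ℝ) ^ 2 + (k.1.2 : ℝ) ^ 2

/-- Eigenvalue `λ_k = 4π²|k|²` of the periodic Laplacian `−Δ`. -/
def lam (k : Freq) : ℝ := 4 * Real.pi ^ 2 * knormSq k

/-- A divergence-free mean-zero vector field `u ∈ Ḣ_⋄` (or, more generally, an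
element of the scale `Ḣ^α_⋄`) on the torus is represented by its Fourier
coefficients `c k` along the orthonormal basis
`e_k(x) = |k|⁻¹ (k₂, −k₁) exp(2πi k·x)` of divergence-free fields. -/
abbrev Coef : Type := Freq → ℂ

/-- Negation of a frequency. -/
def fneg (k : Freq) : Freq := ⟨-k.1, neg_ne_zero.mpr k.2⟩

/-- The conjugacy condition expressing that the coefficients `c` represent a
real-valued vector field (note `e_{−k} = − conj e_k`). -/
def IsReal (c : Coef) : Prop := ∀ k, c (fneg k) = - (starRingEnd ℂ) (c k)

/-- Squared homogeneous Sobolev norm `‖·‖²_{Ḣ^α} = Σ_k λ_k^α |c k|²`. -/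
def hSq (α : ℝ) (c : Coef) : ℝ := ∑' k, lam k ^ α * ‖c k‖ ^ 2

/-- Homogeneous Sobolev norm `‖·‖_{Ḣ^α}`. -/
def hN (α : ℝ) (c : Coef) : ℝ := Real.sqrt (hSq α c)

/-- Finiteness of the `Ḣ^α`-norm. -/
def FinH (α : ℝ) (c : Coef) : Prop := Summable fun k => lam k ^ α * ‖c k‖ ^ 2

/-- Membership in `Ḣ^α_⋄` (real-valued field with finite `Ḣ^α`-norm). -/
def MemH (α : ℝ) (c : Coef) : Prop := IsReal c ∧ FinH α c

/-- Membership in `Ḣ^∞_⋄ = C^∞(Ω)² ∩ Ḣ_⋄`: all Sobolev norms are finite. -/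
def MemHinf (c : Coef) : Prop := ∀ α : ℝ, MemH α c

/-- Real `Ḣ^α` inner product `⟨·,·⟩_{Ḣ^α}` (for real-valued fields). -/
def hInner (α : ℝ) (c d : Coef) : ℝ := ∑' k, lam k ^ α * (c k * (starRingEnd ℂ) (d k)).re

/-- The `L²` inner product. -/
def innerC (c d : Coef) : ℂ := ∑' k, c k * (starRingEnd ℂ) (d k)

/-- The unit vector `(k₂, −k₁)/|k|` spanning the divergence-free direction at
frequency `k`. -/
def evec (k : Freq) : ℝ × ℝ :=
  ((k.1.2 : ℝ) / Real.sqrt (knormSq k), -((k.1.1 : ℝ)) / Real.sqrt (knormSq k))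

/-- Euclidean dot product on `ℝ²`. -/
def dotR (a b : ℝ × ℝ) : ℝ := a.1 * b.1 + a.2 * b.2

/-- A frequency as a real vector. -/
def fvec (k : Freq) : ℝ × ℝ := ((k.1.1 : ℝ), (k.1.2 : ℝ))

/-- Fourier coefficients (along the basis `e_k`) of the Leray-projected
transport nonlinearity `B[u,v] = P[(u·∇)v]`:
`(B[u,v])^(k) · ē_k = 2πi Σ_{m+n=k, n≠0} c_m d_n (e_m·n)(e_n·e_k)`. -/
def Bc (c d : Coef) : Coef := fun k =>
  (((2 * Real.pi : ℝ) : ℂ) * Complex.I) *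
    ∑' m : Freq,
      if h : k.1 - m.1 ≠ 0 then
        c m * d ⟨k.1 - m.1, h⟩ *
          (((dotR (evec m) (fvec ⟨k.1 - m.1, h⟩) *
            dotR (evec ⟨k.1 - m.1, h⟩) (evec k) : ℝ)) : ℂ)
      else 0

/-- The Laplacian `Δ` acting on the scale: `(Δu)^(k) = −λ_k û(k)`. -/
def lapC (c : Coef) : Coef := fun k => -((lam k : ℝ) : ℂ) * c k

/-- Continuity of a trajectory `t ↦ u(t)`, `t ∈ [0,T]`, for the `Ḣ^α`-norm:
`u ∈ C([0,T], Ḣ^α_⋄)`. -/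
def ContH (α : ℝ) (T : ℝ) (u : ℝ → Coef) : Prop :=
  ∀ t ∈ Icc (0:ℝ) T, ∀ ε > 0, ∃ δ > 0, ∀ s ∈ Icc (0:ℝ) T,
    |s - t| < δ → hN α (u s - u t) < ε

/-- Membership `u ∈ L²([0,T], Ḣ^α_⋄)`. -/
def MemL2H (α : ℝ) (T : ℝ) (u : ℝ → Coef) : Prop :=
  (∀ t ∈ Ioc (0:ℝ) T, MemH α (u t)) ∧
    IntegrableOn (fun t => hSq α (u t)) (Ioc 0 T)

/-- `u` is a strong solution on `[0,T]` of the (Leray-projected) periodic 2D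
Navier–Stokes equations `du/dt + νAu + B[u,u] = f`, `u(0) = θ`, posed in `Ḣ_⋄`:
the Fourier coefficients satisfy the corresponding system of ODEs on `(0,T]`,
the trajectory is continuous into `Ḣ¹_⋄` (in particular at `t = 0`), and lies
in `L²([0,T], Ḣ²_⋄)`. -/
structure IsNSSol (ν : ℝ) (f : Coef) (T : ℝ) (θ : Coef) (u : ℝ → Coef) : Prop where
  init : u 0 = θ
  real : ∀ t ∈ Icc (0:ℝ) T, IsReal (u t)
  deriv : ∀ (k : Freq), ∀ t ∈ Ioc (0:ℝ) T,
    HasDerivAt (fun s => u s k)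
      (f k - ((ν * lam k : ℝ) : ℂ) * u t k - Bc (u t) (u t) k) t
  contH1 : ContH 1 T u
  memL2H2 : MemL2H 2 T u

/-- `U` solves the linear parabolic equation
`dU/dt − νΔU + B[u₀, U] + B[U, u₁] = g`, `U(0) = ξ`, on `[0,T]`. -/
structure IsLinPSol (ν : ℝ) (u₀ u₁ : ℝ → Coef) (g : ℝ → Coef) (T : ℝ) (ξ : Coef)
    (U : ℝ → Coef) : Prop where
  init : U 0 = ξ
  real : ∀ t ∈ Icc (0:ℝ) T, IsReal (U t)
  deriv : ∀ (k : Freq), ∀ t ∈ Ioc (0:ℝ) T,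
    HasDerivAt (fun s => U s k)
      (g t k - ((ν * lam k : ℝ) : ℂ) * U t k - Bc (u₀ t) (U t) k - Bc (U t) (u₁ t) k) t

/-- `U = 𝕀_θ[ξ]` solves the linearisation of Navier–Stokes along the
trajectory `u₀`: `dU/dt − νΔU + B[u₀,U] + B[U,u₀] = 0`, `U(0) = ξ`. -/
def IsLinSol (ν : ℝ) (u₀ : ℝ → Coef) (T : ℝ) (ξ : Coef) (U : ℝ → Coef) : Prop :=
  IsLinPSol ν u₀ u₀ (fun _ => 0) T ξ U

/-- The heat semigroup `S_t = e^{νtΔ}` on the scale `Ḣ^α_⋄`. -/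
def heatS (ν t : ℝ) (c : Coef) : Coef := fun k =>
  ((Real.exp (-(ν * lam k * t)) : ℝ) : ℂ) * c k

/-- Duhamel representation of the solution of the periodic heat equation
`du/dt − νΔu = g`, `u(0) = h`. -/
def heatSol (ν : ℝ) (g : ℝ → Coef) (h : Coef) : ℝ → Coef := fun t k =>
  ((Real.exp (-(ν * lam k * t)) : ℝ) : ℂ) *
    (h k + ∫ s in (0:ℝ)..t, ((Real.exp (ν * lam k * s) : ℝ) : ℂ) * g s k)

/-- Real-linearity of a map on the coefficient space. -/
def IsLinMap (Λ : Coef → Coef) : Prop :=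
  (∀ c d, Λ (c + d) = Λ c + Λ d) ∧ ∀ (r : ℝ) (c : Coef), Λ (r • c) = r • Λ c

/-- `Λ` defines a compact (linear) operator `Ḣ^α_⋄ → Ḣ^β_⋄`: it is linear,
maps `Ḣ^α_⋄` into `Ḣ^β_⋄`, and the image of the `Ḣ^α`-unit ball is totally
bounded for the `Ḣ^β`-norm. -/
def IsCompactOp (α β : ℝ) (Λ : Coef → Coef) : Prop :=
  IsLinMap Λ ∧ (∀ c, MemH α c → MemH β (Λ c)) ∧
    ∀ ε > 0, ∃ S : Finset Coef, ∀ c, MemH α c → hN α c ≤ 1 →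
      ∃ s ∈ S, hN β (Λ c - s) < ε

/-- The index `a* = |a|+1` if `|a| ≤ 1`, `a* = |a|` if `|a| ≥ 2`. -/
def astar (a : ℤ) : ℤ := if |a| ≤ 1 then |a| + 1 else |a|

/-- `i`-th component of the unit vector `evec k`. -/
def evecC (i : Fin 2) (k : Freq) : ℝ := if i = 0 then (evec k).1 else (evec k).2

/-- Fourier coefficients (over all of `ℤ²`) of the scalar component `u_i` of a
divergence-free field with coefficients `c`. -/
def compCoef (i : Fin 2) (c : Coef) : ℤ × ℤ → ℂ := fun n =>
  if h : n ≠ 0 then c ⟨n, h⟩ * ((evecC i ⟨n, h⟩ : ℝ) : ℂ) else 0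

/-- Convolution: Fourier coefficients of a pointwise product of two scalar
functions. -/
def convC (F G : ℤ × ℤ → ℂ) : ℤ × ℤ → ℂ := fun n => ∑' m : ℤ × ℤ, F m * G (n - m)

/-- Squared homogeneous Sobolev norm of a scalar function given by its Fourier
coefficients over `ℤ²`. -/
def hSqScalar (α : ℝ) (F : ℤ × ℤ → ℂ) : ℝ := ∑' k : Freq, lam k ^ α * ‖F k.1‖ ^ 2

/-- `‖u vᵀ‖²_{Ḣ^α} = Σ_{i,j=1}^2 ‖u_i v_j‖²_{Ḣ^α}`. -/
def hSqMat (α : ℝ) (c d : Coef) : ℝ :=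
  ∑ i : Fin 2, ∑ j : Fin 2, hSqScalar α (convC (compCoef i c) (compCoef j d))

/-- The character `exp(2πi k·x)`. -/
def efun (k : Freq) (x : ℝ × ℝ) : ℂ :=
  Complex.exp ((((2 * Real.pi : ℝ)) : ℂ) * Complex.I *
    ((k.1.1 : ℂ) * (x.1 : ℂ) + (k.1.2 : ℂ) * (x.2 : ℂ)))

/-- Pointwise evaluation of the `i`-th component of the field. -/
def evalComp (i : Fin 2) (c : Coef) (x : ℝ × ℝ) : ℂ :=
  ∑' k, c k * ((evecC i k : ℝ) : ℂ) * efun k x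

/-- Supremum norm (`C⁰`-norm) of the field. -/
def c0N (c : Coef) : ℝ := ⨆ x : ℝ × ℝ, max ‖evalComp 0 c x‖ ‖evalComp 1 c x‖

/-- The partial derivative `∂_j` acting on divergence-free fields. -/
def pderiv (j : Fin 2) (c : Coef) : Coef := fun k =>
  (((2 * Real.pi : ℝ) : ℂ) * Complex.I) *
    (if j = 0 then ((k.1.1 : ℤ) : ℂ) else ((k.1.2 : ℤ) : ℂ)) * c k

/-- `C¹`-norm of the field. -/
def c1N (c : Coef) : ℝ := c0N c + c0N (pderiv 0 c) + c0N (pderiv 1 c)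

/-- Norm of the multiplier space `B^ℓ`: `C^ℓ(Ω)²` for `ℓ ≤ 1` and `Ḣ^ℓ` for
`ℓ ≥ 2`. -/
def bN (ℓ : ℕ) (c : Coef) : ℝ :=
  if ℓ = 0 then c0N c else if ℓ = 1 then c1N c else hN (ℓ : ℝ) c

end NS2D

namespace NS2D

/-!
Sum `d/dt ‖u_k‖²` against the weights `|k|² w_k²`, where `w_k` is `|k|ᵇ` frozen at high frequencies.
The contribution of the nonlinearity is a sum over triads `(m, n, m + n)`. One part of it is odd
under `m ↔ n` and cancels; the rest is odd under `(m, n) ↦ (-m, m + n)`, which replaces the weight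
by the commutator `w(m + n)² - w(n)²`. The commutator gains the derivative that the nonlinearity
loses, and vanishes for `b = 0`, so that after removal of the truncation
`d/dt ‖u‖²_{b+1} + ν ‖u‖²_{b+2} ≤ (8/ν) ‖f‖²_b + K ‖u‖²_1 ‖u‖²_{b+1}`, with `K = 0` for `b = 0`.

The case `b = 0` bounds `sup ‖u‖²_1` and `∫ ‖u‖²_2` by a multiple of `1 + ‖θ‖²_1`. Using the bound
on `∫ ‖u‖²_{b+1}` from the previous step instead of Gronwall's inequality, each further step of the
induction multiplies the bound by a multiple of `1 + ‖θ‖²_{b+1}`. This yields the exponent `2a` in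
place of an exponential.

For the regularity statements, subtract the stationary Stokes solution `g = (νA)⁻¹ f`. Each mode of
`u - g` is driven by `B[u,u]` only, which is square integrable in time with values in `Ḣ^a` by the
product estimate. This gives a time-independent summable majorant of the modes of `u`, and dominated
convergence gives continuity in `Ḣ^a`.
-/

/-! ### The lattice of wave vectors -/

/-- The wave vector `2πk` of a lattice point `k`, as a complex number. -/
def waveVec (k : ℤ × ℤ) : ℂ := ((2 * Real.pi : ℝ) : ℂ) * ((k.1 : ℂ) + (k.2 : ℂ) * Complex.I)

/-- The wave number `2π|k|` of a lattice point, so that `lam k = waveNum k ^ 2`. -/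
def waveNum (k : ℤ × ℤ) : ℝ := ‖waveVec k‖

/-- The cross product of two wave vectors. -/
def waveCross (m n : ℤ × ℤ) : ℝ := -((starRingEnd ℂ) (waveVec m) * waveVec n).im

/-- The dot product of two wave vectors. -/
def waveDot (m n : ℤ × ℤ) : ℝ := ((starRingEnd ℂ) (waveVec m) * waveVec n).re

lemma waveVec_add (m n : ℤ × ℤ) : waveVec (m + n) = waveVec m + waveVec n := by
  simp only [waveVec, Prod.fst_add, Prod.snd_add, Int.cast_add]
  ring

lemma waveVec_neg (m : ℤ × ℤ) : waveVec (-m) = -waveVec m := by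
  simp only [waveVec, Prod.fst_neg, Prod.snd_neg, Int.cast_neg]
  ring

lemma waveNum_nonneg (k : ℤ × ℤ) : 0 ≤ waveNum k := norm_nonneg _

lemma waveNum_zero : waveNum 0 = 0 := by simp [waveNum, waveVec]

lemma waveNum_neg (k : ℤ × ℤ) : waveNum (-k) = waveNum k := by
  rw [waveNum, waveVec_neg, norm_neg, waveNum]

lemma waveNum_add_le (m n : ℤ × ℤ) : waveNum (m + n) ≤ waveNum m + waveNum n := by
  simp only [waveNum, waveVec_add]
  exact norm_add_le _ _

lemma waveNum_right_le (m n : ℤ × ℤ) : waveNum n ≤ waveNum m + waveNum (m + n) := by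
  simpa only [neg_add_cancel_left, waveNum_neg] using waveNum_add_le (-m) (m + n)

lemma waveNum_left_le (m n : ℤ × ℤ) : waveNum m ≤ waveNum n + waveNum (m + n) := by
  simpa only [add_comm n m] using waveNum_right_le n m

lemma waveNum_sq (k : ℤ × ℤ) :
    waveNum k ^ 2 = 4 * Real.pi ^ 2 * ((k.1 : ℝ) ^ 2 + (k.2 : ℝ) ^ 2) := by
  rw [waveNum, ← Complex.normSq_eq_norm_sq, Complex.normSq_apply]
  simp only [waveVec, Complex.mul_re, Complex.mul_im, Complex.add_re, Complex.add_im,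
    Complex.ofReal_re, Complex.ofReal_im, Complex.intCast_re, Complex.intCast_im, Complex.I_re,
    Complex.I_im]
  ring

lemma sq_add_sq_le_waveNum_sq (k : ℤ × ℤ) : (k.1 : ℝ) ^ 2 + (k.2 : ℝ) ^ 2 ≤ waveNum k ^ 2 := by
  rw [waveNum_sq]
  exact le_mul_of_one_le_left (by positivity) (by nlinarith [Real.pi_gt_three])

lemma abs_fst_le_waveNum (k : ℤ × ℤ) : |(k.1 : ℝ)| ≤ waveNum k :=
  abs_le_of_sq_le_sq (by linarith [sq_add_sq_le_waveNum_sq k, sq_nonneg (k.2 : ℝ)])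
    (waveNum_nonneg k)

lemma abs_snd_le_waveNum (k : ℤ × ℤ) : |(k.2 : ℝ)| ≤ waveNum k :=
  abs_le_of_sq_le_sq (by linarith [sq_add_sq_le_waveNum_sq k, sq_nonneg (k.1 : ℝ)])
    (waveNum_nonneg k)

lemma one_le_waveNum {k : ℤ × ℤ} (hk : k ≠ 0) : 1 ≤ waveNum k := by
  by_cases h : k.1 = 0
  · have h2 : k.2 ≠ 0 := fun h2 => hk (Prod.ext h h2)
    exact le_trans (mod_cast Int.one_le_abs h2) (abs_snd_le_waveNum k)
  · exact le_trans (mod_cast Int.one_le_abs h) (abs_fst_le_waveNum k)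

lemma waveCross_swap (m n : ℤ × ℤ) : waveCross n m = -waveCross m n := by
  simp only [waveCross, Complex.mul_im, Complex.conj_re, Complex.conj_im]
  ring

lemma waveCross_neg_add (m n : ℤ × ℤ) : waveCross (-m) (m + n) = -waveCross m n := by
  simp only [waveCross, waveVec_neg, waveVec_add, map_neg, Complex.mul_im, Complex.neg_re,
    Complex.neg_im, Complex.add_re, Complex.add_im, Complex.conj_re, Complex.conj_im]
  ring

lemma abs_waveCross_le (m n : ℤ × ℤ) : |waveCross m n| ≤ waveNum m * waveNum n := by
  rw [waveCross, abs_neg]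
  refine (Complex.abs_im_le_norm _).trans_eq ?_
  rw [norm_mul, Complex.norm_conj, waveNum, waveNum]

lemma abs_waveCross_le_add (m n : ℤ × ℤ) : |waveCross m n| ≤ waveNum m * waveNum (m + n) := by
  simpa only [waveCross_neg_add, abs_neg, waveNum_neg] using abs_waveCross_le (-m) (m + n)

lemma abs_waveDot_le (m n : ℤ × ℤ) : |waveDot m n| ≤ waveNum m * waveNum n := by
  refine (Complex.abs_re_le_norm _).trans_eq ?_
  rw [norm_mul, Complex.norm_conj, waveNum, waveNum]

lemma waveDot_swap (m n : ℤ × ℤ) : waveDot n m = waveDot m n := by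
  simp only [waveDot, Complex.mul_re, Complex.conj_re, Complex.conj_im]
  ring

lemma waveDot_add_right (m n : ℤ × ℤ) : waveDot n (m + n) = waveNum n ^ 2 + waveDot n m := by
  rw [waveNum, ← Complex.normSq_eq_norm_sq, Complex.normSq_apply]
  simp only [waveDot, waveVec_add, Complex.mul_re, Complex.add_re, Complex.add_im, Complex.conj_re,
    Complex.conj_im]
  ring

/-! ### Lattice counting and the trilinear estimate -/

lemma card_le_of_waveNum_le {r : ℝ} {s : Finset (ℤ × ℤ)} (hr : 0 ≤ r)
    (hs : ∀ m ∈ s, waveNum m ≤ r) : (s.card : ℝ) ≤ (2 * r + 1) ^ 2 := by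
  have mem_Icc {x : ℤ} (hx : |(x : ℝ)| ≤ r) : x ∈ Finset.Icc (-(⌊r⌋₊ : ℤ)) ⌊r⌋₊ := by
    have : x.natAbs ≤ ⌊r⌋₊ := Nat.le_floor (by rwa [Nat.cast_natAbs, Int.cast_abs])
    rw [Finset.mem_Icc]
    omega
  have hsub : s ⊆ Finset.Icc (-(⌊r⌋₊ : ℤ)) ⌊r⌋₊ ×ˢ Finset.Icc (-(⌊r⌋₊ : ℤ)) ⌊r⌋₊ := fun m hm =>
    Finset.mem_product.mpr ⟨mem_Icc ((abs_fst_le_waveNum m).trans (hs m hm)),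
      mem_Icc ((abs_snd_le_waveNum m).trans (hs m hm))⟩
  have hside : ((⌊r⌋₊ : ℤ) + 1 - -(⌊r⌋₊ : ℤ)).toNat = 2 * ⌊r⌋₊ + 1 := by omega
  have hcard : s.card ≤ (2 * ⌊r⌋₊ + 1) ^ 2 := by
    simpa only [Finset.card_product, Int.card_Icc, hside, sq] using Finset.card_le_card hsub
  calc (s.card : ℝ) ≤ (2 * ⌊r⌋₊ + 1) ^ 2 := mod_cast hcard
    _ ≤ (2 * r + 1) ^ 2 := by gcongr; exact Nat.floor_le hr

/-- The indicator of the lattice points `m` of wave number at most twice that of `k`. -/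
def lowIndicator (k m : ℤ × ℤ) : ℝ := if waveNum m ≤ 2 * waveNum k then 1 else 0

lemma lowIndicator_nonneg (k m : ℤ × ℤ) : 0 ≤ lowIndicator k m := by
  unfold lowIndicator; split_ifs <;> norm_num

lemma sum_lowIndicator_le {k : ℤ × ℤ} (hk : k ≠ 0) (s : Finset (ℤ × ℤ)) :
    ∑ m ∈ s, lowIndicator k m ≤ 25 * waveNum k ^ 2 := by
  have h1 := one_le_waveNum hk
  calc ∑ m ∈ s, lowIndicator k m
      = ((s.filter fun m => waveNum m ≤ 2 * waveNum k).card : ℝ) := Finset.sum_boole _ _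
    _ ≤ (2 * (2 * waveNum k) + 1) ^ 2 :=
        card_le_of_waveNum_le (by positivity) fun m hm => (Finset.mem_filter.mp hm).2
    _ ≤ (5 * waveNum k) ^ 2 := by gcongr; linarith
    _ = 25 * waveNum k ^ 2 := by ring

lemma summable_mul_lowIndicator {w : ℤ × ℤ → ℝ} (hw : ∀ k, 0 ≤ w k) (hw0 : w 0 = 0)
    (hs : Summable fun k => waveNum k ^ 2 * w k) :
    Summable (fun x : (ℤ × ℤ) × (ℤ × ℤ) => w x.1 * lowIndicator x.1 x.2) ∧
    ∑' x : (ℤ × ℤ) × (ℤ × ℤ), w x.1 * lowIndicator x.1 x.2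
      ≤ 25 * ∑' k, waveNum k ^ 2 * w k := by
  have nonneg (k) : 0 ≤ fun m => w k * lowIndicator k m := fun m =>
    mul_nonneg (hw k) (lowIndicator_nonneg k m)
  have sum_le (k) (s : Finset (ℤ × ℤ)) :
      ∑ m ∈ s, w k * lowIndicator k m ≤ 25 * (waveNum k ^ 2 * w k) := by
    rcases eq_or_ne k 0 with rfl | hk
    · simp only [hw0, zero_mul, Finset.sum_const_zero, mul_zero, le_refl]
    · rw [← Finset.mul_sum]
      nlinarith only [hw k, sum_lowIndicator_le hk s]
  have inner_summable (k) := summable_of_sum_le (nonneg k) (sum_le k)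
  have inner_le (k) := Real.tsum_le_of_sum_le (nonneg k) (sum_le k)
  have outer_summable : Summable fun k => ∑' m, w k * lowIndicator k m :=
    .of_nonneg_of_le (fun k => tsum_nonneg (nonneg k)) inner_le (hs.mul_left 25)
  have hS : Summable fun x : (ℤ × ℤ) × (ℤ × ℤ) => w x.1 * lowIndicator x.1 x.2 :=
    (summable_prod_of_nonneg fun x => nonneg x.1 x.2).mpr ⟨inner_summable, outer_summable⟩
  refine ⟨hS, ?_⟩
  rw [hS.tsum_prod' inner_summable, ← tsum_mul_left]
  exact outer_summable.tsum_le_tsum inner_le (hs.mul_left 25)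

lemma mul_le_inv_mul_sq_add_mul_sq {ε : ℝ} (hε : 0 < ε) (a b : ℝ) :
    a * b ≤ ε⁻¹ * a ^ 2 + ε * b ^ 2 := by
  have hsq : ε⁻¹ * a ^ 2 + ε * b ^ 2 - a * b
      = ε⁻¹ * ((a - ε * b / 2) ^ 2 + 3 / 4 * (ε * b) ^ 2) := by field_simp; ring
  have : 0 ≤ ε⁻¹ * ((a - ε * b / 2) ^ 2 + 3 / 4 * (ε * b) ^ 2) := by positivity
  linarith

/-- If `|k| ≤ |m| + |n|`, then `k` is at most twice as large as `m` or as `n`; the corresponding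
factor is the one put into the low-frequency term. -/
lemma mul_mul_le_lowIndicator {ε : ℝ} (hε : 0 < ε) {k m n : ℤ × ℤ}
    (h : waveNum k ≤ waveNum m + waveNum n) (p q r : ℝ) :
    p * q * r ≤ ε⁻¹ * (p ^ 2 * q ^ 2 + p ^ 2 * r ^ 2) +
      ε * (q ^ 2 * lowIndicator m k + r ^ 2 * lowIndicator n k) := by
  have hpq : 0 ≤ ε⁻¹ * (p * q) ^ 2 := by positivity
  have hpr : 0 ≤ ε⁻¹ * (p * r) ^ 2 := by positivity
  have hm : 0 ≤ ε * (q ^ 2 * lowIndicator m k) :=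
    mul_nonneg hε.le (mul_nonneg (sq_nonneg q) (lowIndicator_nonneg m k))
  have hn : 0 ≤ ε * (r ^ 2 * lowIndicator n k) :=
    mul_nonneg hε.le (mul_nonneg (sq_nonneg r) (lowIndicator_nonneg n k))
  by_cases hc : waveNum k ≤ 2 * waveNum n
  · have hone : lowIndicator n k = 1 := if_pos hc
    rw [hone] at hn ⊢
    linarith [mul_le_inv_mul_sq_add_mul_sq hε (p * q) r]
  · have hone : lowIndicator m k = 1 := if_pos (by linarith)
    rw [hone] at hm ⊢
    linarith [mul_le_inv_mul_sq_add_mul_sq hε (p * r) q]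

lemma summable_sq_mul_sq_comp {ι : Type*} {A D : ι → ℤ × ℤ}
    (hAD : Function.Injective fun x => (A x, D x)) {p s : ℤ × ℤ → ℝ}
    (hp : Summable fun k => p k ^ 2) (hs : Summable fun k => s k ^ 2) :
    Summable (fun x => p (A x) ^ 2 * s (D x) ^ 2) ∧
    ∑' x, p (A x) ^ 2 * s (D x) ^ 2 ≤ (∑' k, p k ^ 2) * ∑' k, s k ^ 2 := by
  have hps : Summable fun y : (ℤ × ℤ) × (ℤ × ℤ) => p y.1 ^ 2 * s y.2 ^ 2 :=
    hp.mul_of_nonneg hs (fun _ => sq_nonneg _) fun _ => sq_nonneg _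
  rw [hp.tsum_mul_tsum hs hps]
  exact ⟨hps.comp_injective (i := fun x => (A x, D x)) hAD,
    tsum_comp_le_tsum_of_inj hps (fun _ => by positivity) (i := fun x => (A x, D x)) hAD⟩

lemma summable_sq_mul_lowIndicator_comp {ι : Type*} {A D : ι → ℤ × ℤ}
    (hAD : Function.Injective fun x => (A x, D x)) {s : ℤ × ℤ → ℝ} (hs0 : s 0 = 0)
    (hs1 : Summable fun k => waveNum k ^ 2 * s k ^ 2) :
    Summable (fun x => s (D x) ^ 2 * lowIndicator (D x) (A x)) ∧
    ∑' x, s (D x) ^ 2 * lowIndicator (D x) (A x) ≤ 25 * ∑' k, waveNum k ^ 2 * s k ^ 2 := by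
  have hinj : Function.Injective fun x => (D x, A x) := Prod.swap_injective.comp hAD
  have hlow := summable_mul_lowIndicator (w := fun k => s k ^ 2) (fun _ => sq_nonneg _)
    (by simp only [hs0, ne_eq, OfNat.ofNat_ne_zero, not_false_eq_true, zero_pow]) hs1
  exact ⟨hlow.1.comp_injective (i := fun x => (D x, A x)) hinj, (tsum_comp_le_tsum_of_inj hlow.1
    (fun _ => mul_nonneg (sq_nonneg _) (lowIndicator_nonneg _ _))
    (i := fun x => (D x, A x)) hinj).trans hlow.2⟩

/-- The discrete counterpart of Ladyzhenskaya's inequality: one factor is controlled in `L²`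
only, the other two in `L²` and in `Ḣ¹`. -/
theorem summable_and_tsum_mul_mul_le {ι : Type*} {A B C : ι → ℤ × ℤ}
    (hAB : Function.Injective fun x => (A x, B x)) (hAC : Function.Injective fun x => (A x, C x))
    (hABC : ∀ x, waveNum (A x) ≤ waveNum (B x) + waveNum (C x)) {p q r : ℤ × ℤ → ℝ}
    (hp : ∀ k, 0 ≤ p k) (hq : ∀ k, 0 ≤ q k) (hr : ∀ k, 0 ≤ r k) (hq0 : q 0 = 0) (hr0 : r 0 = 0)
    (hpS : Summable fun k => p k ^ 2) (hqS : Summable fun k => q k ^ 2)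
    (hrS : Summable fun k => r k ^ 2) (hq1 : Summable fun k => waveNum k ^ 2 * q k ^ 2)
    (hr1 : Summable fun k => waveNum k ^ 2 * r k ^ 2) :
    Summable (fun x => p (A x) * q (B x) * r (C x)) ∧ ∀ ε > 0,
    ∑' x, p (A x) * q (B x) * r (C x) ≤
      ε⁻¹ * (∑' k, p k ^ 2) * (∑' k, q k ^ 2 + ∑' k, r k ^ 2) +
      25 * ε * (∑' k, waveNum k ^ 2 * q k ^ 2 + ∑' k, waveNum k ^ 2 * r k ^ 2) := by
  obtain ⟨hpq, hpq_le⟩ := summable_sq_mul_sq_comp hAB hpS hqS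
  obtain ⟨hpr, hpr_le⟩ := summable_sq_mul_sq_comp hAC hpS hrS
  obtain ⟨hlq, hlq_le⟩ := summable_sq_mul_lowIndicator_comp hAB hq0 hq1
  obtain ⟨hlr, hlr_le⟩ := summable_sq_mul_lowIndicator_comp hAC hr0 hr1
  have pointwise (ε : ℝ) (hε : 0 < ε) (x : ι) :=
    mul_mul_le_lowIndicator hε (hABC x) (p (A x)) (q (B x)) (r (C x))
  have majorant (ε : ℝ) := ((hpq.add hpr).mul_left ε⁻¹).add ((hlq.add hlr).mul_left ε)
  have hS : Summable fun x => p (A x) * q (B x) * r (C x) :=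
    .of_nonneg_of_le (fun x => mul_nonneg (mul_nonneg (hp _) (hq _)) (hr _))
      (pointwise 1 one_pos) (majorant 1)
  refine ⟨hS, fun ε hε => (hS.tsum_le_tsum (pointwise ε hε) (majorant ε)).trans ?_⟩
  rw [((hpq.add hpr).mul_left ε⁻¹).tsum_add ((hlq.add hlr).mul_left ε), tsum_mul_left,
    tsum_mul_left, hpq.tsum_add hpr, hlq.tsum_add hlr, mul_assoc ε⁻¹, mul_comm 25 ε,
    mul_assoc ε 25]
  exact add_le_add (mul_le_mul_of_nonneg_left (by linarith) (inv_nonneg.mpr hε.le))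
    (mul_le_mul_of_nonneg_left (by linarith) hε.le)

/-! ### The transport nonlinearity on the full lattice -/

/-- The Fourier multiplier of `B`: the coefficient of `c m * c n` in `-i B(c, c)` at frequency
`m + n`. It vanishes by `x / 0 = 0` when `m`, `n` or `m + n` is zero. -/
def transportSymbol (m n : ℤ × ℤ) : ℝ :=
  waveCross m n * waveDot n (m + n) / (waveNum m * waveNum n * waveNum (m + n))

/-- The Leray-projected transport term `B(c, c)` of a field given by coefficients on all of
`ℤ²`, with the zero mode included. -/
def latticeTransport (c : ℤ × ℤ → ℂ) (k : ℤ × ℤ) : ℂ :=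
  Complex.I * ∑' m, c m * c (k - m) * ((transportSymbol m (k - m) : ℝ) : ℂ)

/-- The real trilinear interaction of the modes `m`, `n` and `m + n`. -/
def triadPairing (c : ℤ × ℤ → ℂ) (m n : ℤ × ℤ) : ℝ :=
  (Complex.I * (c m * c n) * (starRingEnd ℂ) (c (m + n))).re

lemma abs_transportSymbol_le (m n : ℤ × ℤ) : |transportSymbol m n| ≤ waveNum n := by
  have hm := waveNum_nonneg m
  have hn := waveNum_nonneg n
  have hk := waveNum_nonneg (m + n)
  rw [transportSymbol, abs_div, abs_mul,
    abs_of_nonneg (by positivity : 0 ≤ waveNum m * waveNum n * waveNum (m + n))]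
  refine div_le_of_le_mul₀ (by positivity) hn ?_
  calc |waveCross m n| * |waveDot n (m + n)|
      ≤ (waveNum m * waveNum n) * (waveNum n * waveNum (m + n)) := by
        gcongr
        exacts [abs_waveCross_le m n, abs_waveDot_le n (m + n)]
    _ = waveNum n * (waveNum m * waveNum n * waveNum (m + n)) := by ring

lemma triadPairing_swap (c : ℤ × ℤ → ℂ) (m n : ℤ × ℤ) :
    triadPairing c n m = triadPairing c m n := by
  rw [triadPairing, triadPairing, mul_comm (c n), add_comm n m]

lemma triadPairing_neg_add {c : ℤ × ℤ → ℂ} (hc : ∀ k, c (-k) = -(starRingEnd ℂ) (c k))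
    (m n : ℤ × ℤ) : triadPairing c (-m) (m + n) = triadPairing c m n := by
  simp only [triadPairing, hc, neg_add_cancel_left, Complex.mul_re, Complex.mul_im, Complex.I_re,
    Complex.I_im, Complex.neg_re, Complex.neg_im, Complex.conj_re, Complex.conj_im]
  ring

lemma triadPairing_eq_zero {c : ℤ × ℤ → ℂ} (h0 : c 0 = 0) {m n : ℤ × ℤ}
    (h : m = 0 ∨ n = 0 ∨ m + n = 0) : triadPairing c m n = 0 := by
  rcases h with h | h | h <;> simp [triadPairing, h, h0]

lemma abs_triadPairing_le (c : ℤ × ℤ → ℂ) (m n : ℤ × ℤ) :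
    |triadPairing c m n| ≤ ‖c m‖ * ‖c n‖ * ‖c (m + n)‖ := by
  refine (Complex.abs_re_le_norm _).trans_eq ?_
  rw [norm_mul, norm_mul, norm_mul, Complex.norm_I, one_mul, Complex.norm_conj]

section Moments

variable {c : ℤ × ℤ → ℂ} {i j : ℕ}

lemma waveNum_pow_mul_sq_le (h0 : c 0 = 0) (hij : i ≤ j) (k : ℤ × ℤ) :
    waveNum k ^ i * ‖c k‖ ^ 2 ≤ waveNum k ^ j * ‖c k‖ ^ 2 := by
  rcases eq_or_ne k 0 with rfl | hk
  · simp only [h0, norm_zero, ne_eq, OfNat.ofNat_ne_zero, not_false_eq_true, zero_pow, mul_zero,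
      le_refl]
  · gcongr
    exact one_le_waveNum hk

lemma summable_waveNum_pow_mul_sq (h0 : c 0 = 0) (hij : i ≤ j)
    (hs : Summable fun k => waveNum k ^ j * ‖c k‖ ^ 2) :
    Summable fun k => waveNum k ^ i * ‖c k‖ ^ 2 :=
  .of_nonneg_of_le (fun k => mul_nonneg (pow_nonneg (waveNum_nonneg k) i) (sq_nonneg _))
    (waveNum_pow_mul_sq_le h0 hij) hs

lemma summable_sq_norm (h0 : c 0 = 0) (hs : Summable fun k => waveNum k ^ j * ‖c k‖ ^ 2) :
    Summable fun k => ‖c k‖ ^ 2 := by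
  simpa only [pow_zero, one_mul] using summable_waveNum_pow_mul_sq h0 (Nat.zero_le j) hs

end Moments

lemma summable_transport_terms {c : ℤ × ℤ → ℂ} (h0 : c 0 = 0)
    (hs : Summable fun k => waveNum k ^ 2 * ‖c k‖ ^ 2) (k : ℤ × ℤ) :
    Summable fun m => ‖c m‖ * ‖c (k - m)‖ * waveNum (k - m) := by
  have hshift : Summable fun m => waveNum (k - m) ^ 2 * ‖c (k - m)‖ ^ 2 :=
    (Equiv.subLeft k).summable_iff.mpr hs
  refine .of_nonneg_of_le
    (fun m => mul_nonneg (by positivity) (waveNum_nonneg _)) (fun m => ?_)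
    ((summable_sq_norm h0 hs).add hshift)
  nlinarith only [sq_nonneg (‖c m‖ - ‖c (k - m)‖ * waveNum (k - m)), sq_nonneg ‖c m‖,
    sq_nonneg (‖c (k - m)‖ * waveNum (k - m))]

lemma norm_transport_term_le (c : ℤ × ℤ → ℂ) (k m : ℤ × ℤ) :
    ‖c m * c (k - m) * ((transportSymbol m (k - m) : ℝ) : ℂ)‖ ≤
      ‖c m‖ * ‖c (k - m)‖ * waveNum (k - m) := by
  rw [norm_mul, norm_mul, Complex.norm_real, Real.norm_eq_abs]
  gcongr
  exact abs_transportSymbol_le m (k - m)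

lemma norm_latticeTransport_le {c : ℤ × ℤ → ℂ} (h0 : c 0 = 0)
    (hs : Summable fun k => waveNum k ^ 2 * ‖c k‖ ^ 2) (k : ℤ × ℤ) :
    ‖latticeTransport c k‖ ≤ ∑' m, ‖c m‖ * ‖c (k - m)‖ * waveNum (k - m) := by
  rw [latticeTransport, norm_mul, Complex.norm_I, one_mul]
  exact tsum_of_norm_bounded (summable_transport_terms h0 hs k).hasSum (norm_transport_term_le c k)

lemma hasSum_re_latticeTransport_mul_conj {c : ℤ × ℤ → ℂ} (h0 : c 0 = 0)
    (hs : Summable fun k => waveNum k ^ 2 * ‖c k‖ ^ 2) (k : ℤ × ℤ) :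
    HasSum (fun m => transportSymbol m (k - m) * triadPairing c m (k - m))
      (latticeTransport c k * (starRingEnd ℂ) (c k)).re := by
  have hterms := (Summable.of_norm_bounded (summable_transport_terms h0 hs k)
    (norm_transport_term_le c k)).hasSum
  refine (Complex.hasSum_re
    ((hterms.mul_left Complex.I).mul_right ((starRingEnd ℂ) (c k)))).congr_fun fun m => ?_
  rw [triadPairing, add_sub_cancel, ← Complex.re_ofReal_mul]
  congr 1
  ring

/-! ### Symmetrization of the enstrophy flux -/

section Reindexing

variable (G : Type*) [AddCommGroup G]

/-- Parametrization of the triads `(m, n, m + n)` by the output frequency and `m`. -/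
def triadEquiv : G × G ≃ G × G where
  toFun y := (y.2, y.1 - y.2)
  invFun x := (x.1 + x.2, x.1)
  left_inv y := by simp only [add_sub_cancel, Prod.mk.eta]
  right_inv x := by simp only [add_sub_cancel_left, Prod.mk.eta]

/-- The involution `(m, n) ↦ (-m, m + n)`, which exchanges the roles of `n` and `m + n` in a
triad. -/
def triadReflection : G × G ≃ G × G where
  toFun x := (-x.1, x.1 + x.2)
  invFun x := (-x.1, x.1 + x.2)
  left_inv x := by simp only [neg_neg, neg_add_cancel_left, Prod.mk.eta]
  right_inv x := by simp only [neg_neg, neg_add_cancel_left, Prod.mk.eta]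

variable {G}

lemma injective_add_fst : Function.Injective fun x : G × G => (x.1 + x.2, x.1) :=
  (triadEquiv G).symm.injective

lemma injective_fst_add : Function.Injective fun x : G × G => (x.1, x.1 + x.2) :=
  Prod.swap_injective.comp injective_add_fst

lemma injective_add_snd : Function.Injective fun x : G × G => (x.1 + x.2, x.2) := by
  intro x y h
  obtain ⟨hsum, hsnd⟩ := Prod.mk.inj h
  exact Prod.ext (add_right_cancel (hsum.trans (by rw [hsnd]))) hsnd

lemma injective_snd_add : Function.Injective fun x : G × G => (x.2, x.1 + x.2) :=
  Prod.swap_injective.comp injective_add_snd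

end Reindexing

/-- The part of the enstrophy flux through a triad that is odd under `triadReflection`. -/
def reflectionKernel (c : ℤ × ℤ → ℂ) (m n : ℤ × ℤ) : ℝ :=
  waveNum (m + n) * waveNum n * waveCross m n / waveNum m * triadPairing c m n

/-- The part of the enstrophy flux through a triad that is odd under exchanging `m` and `n`. -/
def exchangeKernel (c : ℤ × ℤ → ℂ) (m n : ℤ × ℤ) : ℝ :=
  waveNum (m + n) * waveCross m n * waveDot n m / (waveNum m * waveNum n) * triadPairing c m n

lemma waveNum_sq_mul_transportSymbol_mul_triadPairing {c : ℤ × ℤ → ℂ} (h0 : c 0 = 0)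
    (m n : ℤ × ℤ) :
    waveNum (m + n) ^ 2 * (transportSymbol m n * triadPairing c m n) =
      reflectionKernel c m n + exchangeKernel c m n := by
  by_cases h : m = 0 ∨ n = 0 ∨ m + n = 0
  · simp only [reflectionKernel, exchangeKernel, triadPairing_eq_zero h0 h, mul_zero, add_zero]
  · push Not at h
    have hm := (zero_lt_one.trans_le (one_le_waveNum h.1)).ne'
    have hn := (zero_lt_one.trans_le (one_le_waveNum h.2.1)).ne'
    have hk := (zero_lt_one.trans_le (one_le_waveNum h.2.2)).ne'
    simp only [reflectionKernel, exchangeKernel, transportSymbol, waveDot_add_right]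
    field_simp

lemma exchangeKernel_swap (c : ℤ × ℤ → ℂ) (m n : ℤ × ℤ) :
    exchangeKernel c n m = -exchangeKernel c m n := by
  rw [exchangeKernel, exchangeKernel, triadPairing_swap, waveCross_swap, waveDot_swap n m,
    add_comm n m, mul_comm (waveNum n)]
  ring

lemma reflectionKernel_neg_add {c : ℤ × ℤ → ℂ} (hc : ∀ k, c (-k) = -(starRingEnd ℂ) (c k))
    (m n : ℤ × ℤ) : reflectionKernel c (-m) (m + n) = -reflectionKernel c m n := by
  rw [reflectionKernel, reflectionKernel, triadPairing_neg_add hc, waveCross_neg_add,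
    neg_add_cancel_left, waveNum_neg]
  ring

lemma abs_reflectionKernel_le (c : ℤ × ℤ → ℂ) (m n : ℤ × ℤ) :
    |reflectionKernel c m n| ≤
      waveNum n ^ 2 * ‖c n‖ * ‖c m‖ * (waveNum (m + n) * ‖c (m + n)‖) := by
  have hn := waveNum_nonneg n
  have hk := waveNum_nonneg (m + n)
  have hcross : |waveCross m n / waveNum m| ≤ waveNum n := by
    rw [abs_div, abs_of_nonneg (waveNum_nonneg m)]
    exact div_le_of_le_mul₀ (waveNum_nonneg m) hn (by linarith [abs_waveCross_le m n])
  calc |reflectionKernel c m n|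
      = waveNum (m + n) * waveNum n * |waveCross m n / waveNum m| * |triadPairing c m n| := by
        rw [reflectionKernel, mul_div_assoc, abs_mul, abs_mul,
          abs_of_nonneg (mul_nonneg hk hn)]
    _ ≤ waveNum (m + n) * waveNum n * waveNum n * (‖c m‖ * ‖c n‖ * ‖c (m + n)‖) := by
        gcongr
        exact abs_triadPairing_le c m n
    _ = waveNum n ^ 2 * ‖c n‖ * ‖c m‖ * (waveNum (m + n) * ‖c (m + n)‖) := by ring

section TriadSums

variable {c : ℤ × ℤ → ℂ}

lemma summable_triad_products {ι : Type*} {A B C : ι → ℤ × ℤ}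
    (hAB : Function.Injective fun x => (A x, B x)) (hAC : Function.Injective fun x => (A x, C x))
    (hABC : ∀ x, waveNum (A x) ≤ waveNum (B x) + waveNum (C x)) (h0 : c 0 = 0)
    (hs : Summable fun k => waveNum k ^ 4 * ‖c k‖ ^ 2) :
    Summable fun x =>
      waveNum (A x) ^ 2 * ‖c (A x)‖ * ‖c (B x)‖ * (waveNum (C x) * ‖c (C x)‖) := by
  have hs2 := summable_waveNum_pow_mul_sq h0 (by norm_num : 2 ≤ 4) hs
  exact (summable_and_tsum_mul_mul_le (p := fun k => waveNum k ^ 2 * ‖c k‖) (q := fun k => ‖c k‖)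
    (r := fun k => waveNum k * ‖c k‖) hAB hAC hABC (fun k => by positivity)
    (fun k => norm_nonneg _) (fun k => mul_nonneg (waveNum_nonneg k) (norm_nonneg _))
    (by simp only [h0, norm_zero]) (by simp only [h0, norm_zero, mul_zero])
    (hs.congr fun k => by ring) (summable_sq_norm h0 hs) (hs2.congr fun k => by ring) hs2
    (hs.congr fun k => by ring)).1

lemma summable_reflectionKernel (h0 : c 0 = 0)
    (hs : Summable fun k => waveNum k ^ 4 * ‖c k‖ ^ 2) :
    Summable fun x : (ℤ × ℤ) × (ℤ × ℤ) => reflectionKernel c x.1 x.2 :=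
  .of_norm_bounded (summable_triad_products (A := Prod.snd) (B := Prod.fst)
    (C := fun x => x.1 + x.2) Prod.swap_injective injective_snd_add
    (fun _ => waveNum_right_le _ _) h0 hs)
    fun x => abs_reflectionKernel_le c x.1 x.2

lemma summable_enstrophyFlux (h0 : c 0 = 0)
    (hs : Summable fun k => waveNum k ^ 4 * ‖c k‖ ^ 2) :
    Summable fun x : (ℤ × ℤ) × (ℤ × ℤ) =>
      waveNum (x.1 + x.2) ^ 2 * (transportSymbol x.1 x.2 * triadPairing c x.1 x.2) := by
  refine .of_norm_bounded (summable_triad_products (A := fun x : (ℤ × ℤ) × (ℤ × ℤ) => x.1 + x.2)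
    (B := Prod.fst) (C := Prod.snd) injective_add_fst injective_add_snd
    (fun _ => waveNum_add_le _ _) h0 hs) fun x => ?_
  rw [norm_mul, norm_mul, Real.norm_of_nonneg (sq_nonneg _), Real.norm_eq_abs, Real.norm_eq_abs]
  have hx := waveNum_nonneg x.2
  calc waveNum (x.1 + x.2) ^ 2 * (|transportSymbol x.1 x.2| * |triadPairing c x.1 x.2|)
      ≤ waveNum (x.1 + x.2) ^ 2 * (waveNum x.2 * (‖c x.1‖ * ‖c x.2‖ * ‖c (x.1 + x.2)‖)) := by
        gcongr
        exacts [abs_transportSymbol_le _ _, abs_triadPairing_le _ _ _]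
    _ = waveNum (x.1 + x.2) ^ 2 * ‖c (x.1 + x.2)‖ * ‖c x.1‖ * (waveNum x.2 * ‖c x.2‖) := by ring

end TriadSums

lemma summable_mul_of_abs_le {ι : Type*} {W g : ι → ℝ} {M : ℝ} (hW : ∀ x, |W x| ≤ M)
    (hg : Summable g) : Summable fun x => W x * g x :=
  .of_norm_bounded (hg.abs.mul_left M) fun x => by
    rw [norm_mul]
    exact mul_le_mul_of_nonneg_right (hW x) (norm_nonneg _)

section Symmetrization

variable {c : ℤ × ℤ → ℂ} {W : ℤ × ℤ → ℝ} {M : ℝ}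

lemma tsum_latticeTransport_eq_tsum_triads (hW : ∀ k, |W k| ≤ M) (h0 : c 0 = 0)
    (hs : Summable fun k => waveNum k ^ 4 * ‖c k‖ ^ 2) :
    ∑' k, waveNum k ^ 2 * W k * (latticeTransport c k * (starRingEnd ℂ) (c k)).re =
      ∑' x : (ℤ × ℤ) × (ℤ × ℤ), W (x.1 + x.2) *
        (waveNum (x.1 + x.2) ^ 2 * (transportSymbol x.1 x.2 * triadPairing c x.1 x.2)) := by
  have hs2 := summable_waveNum_pow_mul_sq h0 (by norm_num : 2 ≤ 4) hs
  have hrow (k) : HasSum (fun m => waveNum k ^ 2 * W k *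
        (transportSymbol m (k - m) * triadPairing c m (k - m)))
      (waveNum k ^ 2 * W k * (latticeTransport c k * (starRingEnd ℂ) (c k)).re) :=
    (hasSum_re_latticeTransport_mul_conj h0 hs2 k).mul_left _
  have hflux := (triadEquiv (ℤ × ℤ)).summable_iff.mpr
    (summable_mul_of_abs_le (fun x => hW (x.1 + x.2)) (summable_enstrophyFlux h0 hs))
  have hterm (y : (ℤ × ℤ) × (ℤ × ℤ)) : waveNum y.1 ^ 2 * W y.1 *
        (transportSymbol y.2 (y.1 - y.2) * triadPairing c y.2 (y.1 - y.2)) =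
      W (y.2 + (y.1 - y.2)) * (waveNum (y.2 + (y.1 - y.2)) ^ 2 *
        (transportSymbol y.2 (y.1 - y.2) * triadPairing c y.2 (y.1 - y.2))) := by
    rw [add_sub_cancel]
    ring
  rw [← (triadEquiv (ℤ × ℤ)).tsum_eq]
  simp only [triadEquiv, Equiv.coe_fn_mk, ← hterm]
  rw [Summable.tsum_prod' (hflux.congr fun y => (hterm y).symm) fun k => (hrow k).summable]
  exact tsum_congr fun k => (hrow k).tsum_eq.symm

lemma tsum_mul_exchangeKernel :
    ∑' x : (ℤ × ℤ) × (ℤ × ℤ), W (x.1 + x.2) * exchangeKernel c x.1 x.2 = 0 := by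
  have hswap := (Equiv.prodComm (ℤ × ℤ) (ℤ × ℤ)).tsum_eq
    fun x => W (x.1 + x.2) * exchangeKernel c x.1 x.2
  have hodd (x : (ℤ × ℤ) × (ℤ × ℤ)) : W (x.2 + x.1) * exchangeKernel c x.2 x.1 =
      -(W (x.1 + x.2) * exchangeKernel c x.1 x.2) := by
    rw [exchangeKernel_swap, add_comm, mul_neg]
  simp only [Equiv.prodComm_apply, Prod.fst_swap, Prod.snd_swap, hodd, tsum_neg] at hswap
  linarith

/-- For `W = 1` this is the conservation of enstrophy by the two-dimensional Euler flow. -/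
theorem tsum_latticeTransport_eq_half_tsum_sub (hW : ∀ k, |W k| ≤ M) (h0 : c 0 = 0)
    (hs : Summable fun k => waveNum k ^ 4 * ‖c k‖ ^ 2)
    (hc : ∀ k, c (-k) = -(starRingEnd ℂ) (c k)) :
    ∑' k, waveNum k ^ 2 * W k * (latticeTransport c k * (starRingEnd ℂ) (c k)).re =
      1 / 2 * ∑' x : (ℤ × ℤ) × (ℤ × ℤ),
        (W (x.1 + x.2) - W x.2) * reflectionKernel c x.1 x.2 := by
  have hout : Summable fun x : (ℤ × ℤ) × (ℤ × ℤ) => W (x.1 + x.2) * reflectionKernel c x.1 x.2 :=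
    summable_mul_of_abs_le (fun _ => hW _) (summable_reflectionKernel h0 hs)
  have hin : Summable fun x : (ℤ × ℤ) × (ℤ × ℤ) => W x.2 * reflectionKernel c x.1 x.2 :=
    summable_mul_of_abs_le (fun _ => hW _) (summable_reflectionKernel h0 hs)
  have hexch : Summable fun x : (ℤ × ℤ) × (ℤ × ℤ) => W (x.1 + x.2) * exchangeKernel c x.1 x.2 := by
    refine summable_mul_of_abs_le (fun _ => hW _) <|
      ((summable_enstrophyFlux h0 hs).sub (summable_reflectionKernel h0 hs)).congr fun x => ?_
    rw [waveNum_sq_mul_transportSymbol_mul_triadPairing h0, add_sub_cancel_left]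
  have hreflect : ∑' x : (ℤ × ℤ) × (ℤ × ℤ), W (x.1 + x.2) * reflectionKernel c x.1 x.2 =
      -∑' x : (ℤ × ℤ) × (ℤ × ℤ), W x.2 * reflectionKernel c x.1 x.2 := by
    rw [← (triadReflection (ℤ × ℤ)).tsum_eq]
    simp only [triadReflection, Equiv.coe_fn_mk, neg_add_cancel_left,
      reflectionKernel_neg_add hc, mul_neg, tsum_neg]
  calc ∑' k, waveNum k ^ 2 * W k * (latticeTransport c k * (starRingEnd ℂ) (c k)).re
      = ∑' x : (ℤ × ℤ) × (ℤ × ℤ), (W (x.1 + x.2) * reflectionKernel c x.1 x.2 +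
          W (x.1 + x.2) * exchangeKernel c x.1 x.2) := by
        simp only [tsum_latticeTransport_eq_tsum_triads hW h0 hs,
          waveNum_sq_mul_transportSymbol_mul_triadPairing h0, mul_add]
    _ = ∑' x : (ℤ × ℤ) × (ℤ × ℤ), W (x.1 + x.2) * reflectionKernel c x.1 x.2 := by
        rw [hout.tsum_add hexch, tsum_mul_exchangeKernel, add_zero]
    _ = 1 / 2 * ∑' x : (ℤ × ℤ) × (ℤ × ℤ),
          (W (x.1 + x.2) - W x.2) * reflectionKernel c x.1 x.2 := by
        simp only [sub_mul]
        rw [hout.tsum_sub hin]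
        linarith

end Symmetrization

/-! ### The commutator estimate -/

/-- A bounded even weight on the lattice which is quasi-subadditive with constant `c₂` and whose
commutator with transport by a field of frequency `m` gains one derivative with constant `c₁`. -/
structure IsCommutatorWeight (ω : ℤ × ℤ → ℝ) (Ω c₁ c₂ : ℝ) : Prop where
  nonneg : ∀ k, 0 ≤ ω k
  le : ∀ k, ω k ≤ Ω
  even : ∀ k, ω (-k) = ω k
  commutator : ∀ m n, |ω (m + n) - ω n| * min (waveNum n) (waveNum (m + n)) ≤
    c₁ * waveNum m * (ω n + ω (m + n))
  add_le : ∀ m n, ω (m + n) ≤ c₂ * (ω m + ω n)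

lemma sq_add_le_of_quasi_subadditive {x y z C : ℝ} (hx : 0 ≤ x) (hy : 0 ≤ y) (hz : 0 ≤ z)
    (hC : 0 ≤ C) (hzxy : z ≤ C * (x + y)) (hyxz : y ≤ C * (x + z)) :
    (z + y) ^ 2 ≤ (2 * C + 2) * (y * z + x * z + x * y) := by
  have hz2 := mul_le_mul_of_nonneg_left hzxy hz
  have hy2 := mul_le_mul_of_nonneg_left hyxz hy
  have hxz := mul_nonneg hx hz
  have hxy := mul_nonneg hx hy
  nlinarith [mul_nonneg hC hxz, mul_nonneg hC hxy]

namespace IsCommutatorWeight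

variable {c : ℤ × ℤ → ℂ} {ω : ℤ × ℤ → ℝ} {Ω c₁ c₂ : ℝ}

lemma sq_le (hω : IsCommutatorWeight ω Ω c₁ c₂) (k : ℤ × ℤ) : ω k ^ 2 ≤ Ω ^ 2 :=
  pow_le_pow_left₀ (hω.nonneg k) (hω.le k) 2

lemma right_le (hω : IsCommutatorWeight ω Ω c₁ c₂) (m n : ℤ × ℤ) :
    ω n ≤ c₂ * (ω m + ω (m + n)) := by
  simpa only [neg_add_cancel_left, hω.even] using hω.add_le (-m) (m + n)

lemma sq_add_le (hω : IsCommutatorWeight ω Ω c₁ c₂) (hc₂ : 0 ≤ c₂) (m n : ℤ × ℤ) :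
    (ω (m + n) + ω n) ^ 2 ≤
      (2 * c₂ + 2) * (ω n * ω (m + n) + ω m * ω (m + n) + ω m * ω n) :=
  sq_add_le_of_quasi_subadditive (hω.nonneg m) (hω.nonneg n) (hω.nonneg _) hc₂
    (hω.add_le m n) (hω.right_le m n)

lemma summable_mul_sq (hω : IsCommutatorWeight ω Ω c₁ c₂) {i : ℕ}
    (hs : Summable fun k => waveNum k ^ i * ‖c k‖ ^ 2) :
    Summable fun k => waveNum k ^ i * ω k ^ 2 * ‖c k‖ ^ 2 :=
  (summable_mul_of_abs_le (W := fun k => ω k ^ 2)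
    (fun k => (abs_of_nonneg (sq_nonneg _)).trans_le (hω.sq_le k)) hs).congr fun k => by ring

/-- Since `|m × n| ≤ |m| min(|n|, |m + n|)`, the commutator bound compensates for the factor
`|m|⁻¹` in the kernel. -/
lemma abs_sub_mul_cross_le (hω : IsCommutatorWeight ω Ω c₁ c₂) (m n : ℤ × ℤ) :
    |ω (m + n) - ω n| * (|waveCross m n| / waveNum m) ≤
      c₁ * waveNum m * (ω n + ω (m + n)) := by
  have hcross : |waveCross m n| / waveNum m ≤ min (waveNum n) (waveNum (m + n)) :=
    le_min
      (div_le_of_le_mul₀ (waveNum_nonneg m) (waveNum_nonneg n)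
        (by linarith [abs_waveCross_le m n]))
      (div_le_of_le_mul₀ (waveNum_nonneg m) (waveNum_nonneg _)
        (by linarith [abs_waveCross_le_add m n]))
  exact (mul_le_mul_of_nonneg_left hcross (abs_nonneg _)).trans (hω.commutator m n)

lemma abs_sq_sub_mul_reflectionKernel_le (hω : IsCommutatorWeight ω Ω c₁ c₂) (hc₁ : 0 ≤ c₁)
    (m n : ℤ × ℤ) :
    |(ω (m + n) ^ 2 - ω n ^ 2) * reflectionKernel c m n| ≤
      c₁ * (ω (m + n) + ω n) ^ 2 * (waveNum m * waveNum n * waveNum (m + n)) *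
        (‖c m‖ * ‖c n‖ * ‖c (m + n)‖) := by
  have hm := waveNum_nonneg m
  have hn := waveNum_nonneg n
  have hk := waveNum_nonneg (m + n)
  have hωn := hω.nonneg n
  have hωk := hω.nonneg (m + n)
  have hsub := hω.abs_sub_mul_cross_le m n
  have hpair := abs_triadPairing_le c m n
  calc |(ω (m + n) ^ 2 - ω n ^ 2) * reflectionKernel c m n|
      = |ω (m + n) - ω n| * (|waveCross m n| / waveNum m) * (ω (m + n) + ω n) *
          (waveNum (m + n) * waveNum n) * |triadPairing c m n| := by
        rw [reflectionKernel, sq_sub_sq, abs_mul, abs_mul, abs_mul, abs_div, abs_mul, abs_mul,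
          abs_of_nonneg hk, abs_of_nonneg hn, abs_of_nonneg hm, abs_of_nonneg (add_nonneg hωk hωn)]
        ring
    _ ≤ c₁ * waveNum m * (ω n + ω (m + n)) * (ω (m + n) + ω n) *
          (waveNum (m + n) * waveNum n) * (‖c m‖ * ‖c n‖ * ‖c (m + n)‖) := by gcongr
    _ = c₁ * (ω (m + n) + ω n) ^ 2 * (waveNum m * waveNum n * waveNum (m + n)) *
        (‖c m‖ * ‖c n‖ * ‖c (m + n)‖) := by ring

lemma summable_and_tsum_triads_le (hω : IsCommutatorWeight ω Ω c₁ c₂) {ι : Type*}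
    {A B C : ι → ℤ × ℤ} (hAB : Function.Injective fun x => (A x, B x))
    (hAC : Function.Injective fun x => (A x, C x))
    (hABC : ∀ x, waveNum (A x) ≤ waveNum (B x) + waveNum (C x)) (h0 : c 0 = 0)
    (hs : Summable fun k => waveNum k ^ 4 * ‖c k‖ ^ 2) :
    Summable (fun x => waveNum (A x) * ‖c (A x)‖ * (ω (B x) * (waveNum (B x) * ‖c (B x)‖)) *
      (ω (C x) * (waveNum (C x) * ‖c (C x)‖))) ∧ ∀ ε > 0,
    ∑' x, waveNum (A x) * ‖c (A x)‖ * (ω (B x) * (waveNum (B x) * ‖c (B x)‖)) *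
        (ω (C x) * (waveNum (C x) * ‖c (C x)‖)) ≤
      2 * ε⁻¹ * (∑' k, waveNum k ^ 2 * ‖c k‖ ^ 2) *
        (∑' k, waveNum k ^ 2 * ω k ^ 2 * ‖c k‖ ^ 2) +
      50 * ε * ∑' k, waveNum k ^ 4 * ω k ^ 2 * ‖c k‖ ^ 2 := by
  have hs2 := summable_waveNum_pow_mul_sq h0 (by norm_num : 2 ≤ 4) hs
  have hp0 (k) : 0 ≤ waveNum k * ‖c k‖ := mul_nonneg (waveNum_nonneg k) (norm_nonneg _)
  have hq0 (k) : 0 ≤ ω k * (waveNum k * ‖c k‖) := mul_nonneg (hω.nonneg k) (hp0 k)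
  have hp (k) : (waveNum k * ‖c k‖) ^ 2 = waveNum k ^ 2 * ‖c k‖ ^ 2 := by ring
  have hq (k) : (ω k * (waveNum k * ‖c k‖)) ^ 2 = waveNum k ^ 2 * ω k ^ 2 * ‖c k‖ ^ 2 := by ring
  have hq1 (k) : waveNum k ^ 2 * (ω k * (waveNum k * ‖c k‖)) ^ 2 =
      waveNum k ^ 4 * ω k ^ 2 * ‖c k‖ ^ 2 := by ring
  have hqS := (hω.summable_mul_sq hs2).congr fun k => (hq k).symm
  have hq1S := (hω.summable_mul_sq hs).congr fun k => (hq1 k).symm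
  have hq00 : ω 0 * (waveNum 0 * ‖c 0‖) = 0 := by simp only [h0, norm_zero, mul_zero]
  have htri := summable_and_tsum_mul_mul_le (p := fun k => waveNum k * ‖c k‖)
    (q := fun k => ω k * (waveNum k * ‖c k‖)) (r := fun k => ω k * (waveNum k * ‖c k‖)) hAB hAC
    hABC hp0 hq0 hq0 hq00 hq00 (hs2.congr fun k => (hp k).symm) hqS hqS hq1S hq1S
  refine ⟨htri.1, fun ε hε => (htri.2 ε hε).trans_eq ?_⟩
  simp only [hq1]
  simp only [hp, hq]
  ring

lemma abs_sq_sub_mul_reflectionKernel_le_triads (hω : IsCommutatorWeight ω Ω c₁ c₂)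
    (hc₁ : 0 ≤ c₁) (hc₂ : 0 ≤ c₂) (m n : ℤ × ℤ) :
    |(ω (m + n) ^ 2 - ω n ^ 2) * reflectionKernel c m n| ≤
      c₁ * (2 * c₂ + 2) * (waveNum m * ‖c m‖ * (ω n * (waveNum n * ‖c n‖)) *
          (ω (m + n) * (waveNum (m + n) * ‖c (m + n)‖)) +
        waveNum n * ‖c n‖ * (ω m * (waveNum m * ‖c m‖)) *
          (ω (m + n) * (waveNum (m + n) * ‖c (m + n)‖)) +
        waveNum (m + n) * ‖c (m + n)‖ * (ω m * (waveNum m * ‖c m‖)) *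
          (ω n * (waveNum n * ‖c n‖))) := by
  have hm := waveNum_nonneg m
  have hn := waveNum_nonneg n
  have hk := waveNum_nonneg (m + n)
  refine (hω.abs_sq_sub_mul_reflectionKernel_le hc₁ m n).trans ?_
  refine (mul_le_mul_of_nonneg_right (mul_le_mul_of_nonneg_right (mul_le_mul_of_nonneg_left
    (hω.sq_add_le hc₂ m n) hc₁) (by positivity)) (by positivity)).trans_eq ?_
  ring

lemma abs_tsum_commutator_le (hω : IsCommutatorWeight ω Ω c₁ c₂) (hc₁ : 0 ≤ c₁) (hc₂ : 0 ≤ c₂)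
    (h0 : c 0 = 0) (hs : Summable fun k => waveNum k ^ 4 * ‖c k‖ ^ 2) {ε : ℝ} (hε : 0 < ε) :
    |∑' x : (ℤ × ℤ) × (ℤ × ℤ), (ω (x.1 + x.2) ^ 2 - ω x.2 ^ 2) * reflectionKernel c x.1 x.2| ≤
      2 * (c₁ * (c₂ + 1)) * (6 * ε⁻¹ * (∑' k, waveNum k ^ 2 * ‖c k‖ ^ 2) *
          (∑' k, waveNum k ^ 2 * ω k ^ 2 * ‖c k‖ ^ 2) +
        150 * ε * ∑' k, waveNum k ^ 4 * ω k ^ 2 * ‖c k‖ ^ 2) := by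
  obtain ⟨hs_m, hle_m⟩ := hω.summable_and_tsum_triads_le
    (A := fun x : (ℤ × ℤ) × (ℤ × ℤ) => x.1) (B := fun x => x.2) (C := fun x => x.1 + x.2)
    (fun _ _ h => h) injective_fst_add (fun _ => waveNum_left_le _ _) h0 hs
  obtain ⟨hs_n, hle_n⟩ := hω.summable_and_tsum_triads_le
    (A := fun x : (ℤ × ℤ) × (ℤ × ℤ) => x.2) (B := fun x => x.1) (C := fun x => x.1 + x.2)
    Prod.swap_injective injective_snd_add (fun _ => waveNum_right_le _ _) h0 hs
  obtain ⟨hs_k, hle_k⟩ := hω.summable_and_tsum_triads_le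
    (A := fun x : (ℤ × ℤ) × (ℤ × ℤ) => x.1 + x.2) (B := fun x => x.1) (C := fun x => x.2)
    injective_add_fst injective_add_snd (fun _ => waveNum_add_le _ _) h0 hs
  have hbound := tsum_of_norm_bounded
    (f := fun x => (ω (x.1 + x.2) ^ 2 - ω x.2 ^ 2) * reflectionKernel c x.1 x.2)
    (((hs_m.add hs_n).add hs_k).mul_left (c₁ * (2 * c₂ + 2))).hasSum
    fun x => hω.abs_sq_sub_mul_reflectionKernel_le_triads hc₁ hc₂ x.1 x.2
  rw [Real.norm_eq_abs, tsum_mul_left, (hs_m.add hs_n).tsum_add hs_k, hs_m.tsum_add hs_n] at hbound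
  refine (hbound.trans (mul_le_mul_of_nonneg_left (add_le_add (add_le_add (hle_m ε hε) (hle_n ε hε))
    (hle_k ε hε)) (by positivity))).trans_eq ?_
  ring

/-- The weighted energy estimate for the transport term; the free parameter `δ` lets the highest
norm be absorbed by viscosity. -/
theorem abs_tsum_latticeTransport_le (hω : IsCommutatorWeight ω Ω c₁ c₂) (hc₁ : 0 ≤ c₁)
    (hc₂ : 0 ≤ c₂) (h0 : c 0 = 0) (hs : Summable fun k => waveNum k ^ 4 * ‖c k‖ ^ 2)
    (hc : ∀ k, c (-k) = -(starRingEnd ℂ) (c k)) {δ : ℝ} (hδ : 0 < δ) :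
    |∑' k, waveNum k ^ 2 * ω k ^ 2 * (latticeTransport c k * (starRingEnd ℂ) (c k)).re| ≤
      900 * (c₁ * (c₂ + 1)) ^ 2 / δ * (∑' k, waveNum k ^ 2 * ‖c k‖ ^ 2) *
        (∑' k, waveNum k ^ 2 * ω k ^ 2 * ‖c k‖ ^ 2) +
      δ * ∑' k, waveNum k ^ 4 * ω k ^ 2 * ‖c k‖ ^ 2 := by
  have hκ : 0 ≤ c₁ * (c₂ + 1) := by positivity
  have hD : 0 ≤ ∑' k, waveNum k ^ 4 * ω k ^ 2 * ‖c k‖ ^ 2 := tsum_nonneg fun k => by positivity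
  have hcomm {ε : ℝ} (hε : 0 < ε) := hω.abs_tsum_commutator_le (c := c) hc₁ hc₂ h0 hs hε
  rw [tsum_latticeTransport_eq_half_tsum_sub (W := fun k => ω k ^ 2)
    (fun k => (abs_of_nonneg (sq_nonneg _)).trans_le (hω.sq_le k)) h0 hs hc, abs_mul,
    abs_of_pos one_half_pos]
  generalize c₁ * (c₂ + 1) = κ at hκ hcomm ⊢
  rcases hκ.eq_or_lt with rfl | hκ
  · have hzero := hcomm one_pos
    simp only [mul_zero, zero_mul] at hzero
    simp only [ne_eq, OfNat.ofNat_ne_zero, not_false_eq_true, zero_pow, mul_zero, zero_div,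
      zero_mul, zero_add]
    linarith [mul_nonneg hδ.le hD]
  · have hbound := hcomm (ε := δ / (150 * κ)) (by positivity)
    calc _ ≤ 1 / 2 * _ := mul_le_mul_of_nonneg_left hbound one_half_pos.le
      _ = _ := by field_simp; ring

end IsCommutatorWeight

/-! ### The product estimate -/

lemma summable_mul_of_sq {ι : Type*} {f g : ι → ℝ} (hf : Summable fun i => f i ^ 2)
    (hg : Summable fun i => g i ^ 2) : Summable fun i => f i * g i :=
  .of_norm_bounded (hf.add hg) fun i => by
    rw [Real.norm_eq_abs, abs_le]
    constructor <;> nlinarith only [sq_nonneg (f i + g i), sq_nonneg (f i - g i),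
      sq_nonneg (f i), sq_nonneg (g i)]

lemma sq_tsum_mul_le {ι : Type*} {f g : ι → ℝ} (hf : Summable fun i => f i ^ 2)
    (hg : Summable fun i => g i ^ 2) :
    (∑' i, f i * g i) ^ 2 ≤ (∑' i, f i ^ 2) * ∑' i, g i ^ 2 :=
  le_of_tendsto' ((summable_mul_of_sq hf hg).hasSum.pow 2) fun s =>
    (Finset.sum_mul_sq_le_sq_mul_sq s f g).trans <|
      mul_le_mul (hf.sum_le_tsum s fun _ _ => sq_nonneg _)
        (hg.sum_le_tsum s fun _ _ => sq_nonneg _) (Finset.sum_nonneg fun _ _ => sq_nonneg _)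
        (tsum_nonneg fun _ => sq_nonneg _)

section Young

variable {G : Type*} [AddCommGroup G] {p h : G → ℝ}

lemma hasSum_mul_sq_convolution (hp0 : ∀ k, 0 ≤ p k) (hp : Summable p)
    (hh : Summable fun k => h k ^ 2) :
    HasSum (fun y : G × G => p y.2 * h (y.1 - y.2) ^ 2) ((∑' m, p m) * ∑' k, h k ^ 2) := by
  have hprod := hp.mul_of_nonneg hh hp0 fun k => sq_nonneg (h k)
  have hsum := hprod.hasSum
  rw [← hp.tsum_mul_tsum hh hprod] at hsum
  exact (triadEquiv G).hasSum_iff.mpr hsum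

lemma sqrt_mul_sqrt_mul (hp0 : ∀ k, 0 ≤ p k) (k m : G) :
    √(p m) * (√(p m) * h (k - m)) = p m * h (k - m) := by
  rw [← mul_assoc, Real.mul_self_sqrt (hp0 m)]

lemma summable_convolution (hp0 : ∀ k, 0 ≤ p k) (hp : Summable p)
    (hh : Summable fun k => h k ^ 2) (k : G) : Summable fun m => p m * h (k - m) := by
  have hrow := (hasSum_mul_sq_convolution hp0 hp hh).summable.prod_factor k
  refine (summable_mul_of_sq (f := fun m => √(p m)) (g := fun m => √(p m) * h (k - m)) ?_ ?_).congr
    (sqrt_mul_sqrt_mul hp0 k)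
  · simpa only [Real.sq_sqrt (hp0 _)] using hp
  · simpa only [mul_pow, Real.sq_sqrt (hp0 _)] using hrow

lemma sq_tsum_convolution_le (hp0 : ∀ k, 0 ≤ p k) (hp : Summable p)
    (hh : Summable fun k => h k ^ 2) (k : G) :
    (∑' m, p m * h (k - m)) ^ 2 ≤ (∑' m, p m) * ∑' m, p m * h (k - m) ^ 2 := by
  have hrow := (hasSum_mul_sq_convolution hp0 hp hh).summable.prod_factor k
  have hcs := sq_tsum_mul_le (f := fun m => √(p m)) (g := fun m => √(p m) * h (k - m))
    (by simpa only [Real.sq_sqrt (hp0 _)] using hp)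
    (by simpa only [mul_pow, Real.sq_sqrt (hp0 _)] using hrow)
  simpa only [sqrt_mul_sqrt_mul hp0, mul_pow, Real.sq_sqrt (hp0 _)] using hcs

theorem summable_and_tsum_sq_convolution_le (hp0 : ∀ k, 0 ≤ p k) (hp : Summable p)
    (hh : Summable fun k => h k ^ 2) :
    Summable (fun k => (∑' m, p m * h (k - m)) ^ 2) ∧
      ∑' k, (∑' m, p m * h (k - m)) ^ 2 ≤ (∑' m, p m) ^ 2 * ∑' k, h k ^ 2 := by
  have hdouble := hasSum_mul_sq_convolution hp0 hp hh
  have hrows := hdouble.summable.prod.mul_left (∑' m, p m)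
  have hle := sq_tsum_convolution_le hp0 hp hh
  have hsum := Summable.of_nonneg_of_le (fun k => sq_nonneg _) hle hrows
  refine ⟨hsum, (hsum.tsum_le_tsum hle hrows).trans_eq ?_⟩
  rw [tsum_mul_left, ← hdouble.summable.tsum_prod, hdouble.tsum_eq]
  ring

end Young

lemma norm_finTwoArrowEquiv_symm_le_waveNum (k : ℤ × ℤ) :
    ‖(finTwoArrowEquiv ℤ).symm k‖ ≤ waveNum k := by
  refine (pi_norm_le_iff_of_nonneg (waveNum_nonneg k)).mpr (Fin.forall_fin_two.mpr ⟨?_, ?_⟩)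
  · exact (Int.norm_eq_abs k.1).trans_le (abs_fst_le_waveNum k)
  · exact (Int.norm_eq_abs k.2).trans_le (abs_snd_le_waveNum k)

lemma summable_inv_waveNum_sq_sq : Summable fun k : ℤ × ℤ => ((waveNum k ^ 2)⁻¹) ^ 2 := by
  have hzeta := EisensteinSeries.summable_one_div_norm_rpow (k := 4) (by norm_num)
  rw [← (finTwoArrowEquiv ℤ).symm.summable_iff] at hzeta
  refine .of_norm_bounded_eventually hzeta ?_
  filter_upwards [(Set.finite_singleton (0 : ℤ × ℤ)).compl_mem_cofinite] with k hk
  have hpos : 0 < ‖(finTwoArrowEquiv ℤ).symm k‖ :=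
    norm_pos_iff.mpr fun h => hk (Prod.ext (congrFun h 0) (congrFun h 1))
  rw [Real.norm_of_nonneg (by positivity), inv_pow, ← pow_mul, Function.comp_apply,
    Real.rpow_neg hpos.le]
  norm_cast
  gcongr
  exact norm_finTwoArrowEquiv_symm_le_waveNum k

lemma summable_norm_and_sq_tsum_norm_le {c : ℤ × ℤ → ℂ} (h0 : c 0 = 0)
    (hs : Summable fun k => waveNum k ^ 4 * ‖c k‖ ^ 2) :
    Summable (fun k => ‖c k‖) ∧
      (∑' k, ‖c k‖) ^ 2 ≤
        (∑' k, ((waveNum k ^ 2)⁻¹) ^ 2) * ∑' k, waveNum k ^ 4 * ‖c k‖ ^ 2 := by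
  have hsq (k) : (waveNum k ^ 2 * ‖c k‖) ^ 2 = waveNum k ^ 4 * ‖c k‖ ^ 2 := by ring
  have hnorm (k) : (waveNum k ^ 2)⁻¹ * (waveNum k ^ 2 * ‖c k‖) = ‖c k‖ := by
    rcases eq_or_ne k 0 with rfl | hk
    · simp only [h0, norm_zero, mul_zero]
    · exact inv_mul_cancel_left₀ (pow_pos (zero_lt_one.trans_le (one_le_waveNum hk)) 2).ne' _
  have hg := hs.congr fun k => (hsq k).symm
  have hsum := summable_mul_of_sq summable_inv_waveNum_sq_sq hg
  have hle := sq_tsum_mul_le summable_inv_waveNum_sq_sq hg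
  simp only [hnorm, hsq] at hsum hle
  exact ⟨hsum, hle⟩

lemma waveNum_pow_mul_waveNum_le (s : ℕ) (k m : ℤ × ℤ) :
    waveNum k ^ s * waveNum (k - m) ≤
      2 ^ s * (waveNum m ^ (s + 1) + waveNum (k - m) ^ (s + 1)) := by
  have hm := waveNum_nonneg m
  have hn := waveNum_nonneg (k - m)
  have hk := waveNum_nonneg k
  have htri : waveNum k ≤ waveNum m + waveNum (k - m) := by
    simpa only [add_sub_cancel] using waveNum_add_le m (k - m)
  calc waveNum k ^ s * waveNum (k - m)
      ≤ (waveNum m + waveNum (k - m)) ^ s * (waveNum m + waveNum (k - m)) := by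
        gcongr
        exact le_add_of_nonneg_left hm
    _ = (waveNum m + waveNum (k - m)) ^ (s + 1) := (pow_succ _ s).symm
    _ ≤ 2 ^ s * (waveNum m ^ (s + 1) + waveNum (k - m) ^ (s + 1)) := add_pow_le hm hn (s + 1)

lemma waveNum_pow_mul_norm_latticeTransport_le {c : ℤ × ℤ → ℂ} {s : ℕ} (h0 : c 0 = 0)
    (hs : Summable fun k => waveNum k ^ 4 * ‖c k‖ ^ 2)
    (hS : Summable fun k => (waveNum k ^ (s + 1) * ‖c k‖) ^ 2) (k : ℤ × ℤ) :
    waveNum k ^ s * ‖latticeTransport c k‖ ≤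
      2 ^ (s + 1) * ∑' m, ‖c m‖ * (waveNum (k - m) ^ (s + 1) * ‖c (k - m)‖) := by
  have hs2 := summable_waveNum_pow_mul_sq h0 (by norm_num : 2 ≤ 4) hs
  have hout := (summable_convolution (fun k => norm_nonneg (c k))
    (summable_norm_and_sq_tsum_norm_le h0 hs).1 hS k).hasSum
  have hin := (Equiv.subLeft k).hasSum_iff.mpr hout
  simp only [Function.comp_def, Equiv.subLeft_apply, sub_sub_cancel] at hin
  calc waveNum k ^ s * ‖latticeTransport c k‖
      ≤ waveNum k ^ s * ∑' m, ‖c m‖ * ‖c (k - m)‖ * waveNum (k - m) :=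
        mul_le_mul_of_nonneg_left (norm_latticeTransport_le h0 hs2 k)
          (pow_nonneg (waveNum_nonneg k) s)
    _ ≤ 2 ^ s * (∑' m, ‖c m‖ * (waveNum (k - m) ^ (s + 1) * ‖c (k - m)‖) +
          ∑' m, ‖c m‖ * (waveNum (k - m) ^ (s + 1) * ‖c (k - m)‖)) :=
        hasSum_le (fun m => ?_) ((summable_transport_terms h0 hs2 k).hasSum.mul_left _)
          ((hout.add hin).mul_left (2 ^ s))
    _ = 2 ^ (s + 1) * ∑' m, ‖c m‖ * (waveNum (k - m) ^ (s + 1) * ‖c (k - m)‖) := by ring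
  linarith [mul_le_mul_of_nonneg_left (waveNum_pow_mul_waveNum_le s k m)
    (mul_nonneg (norm_nonneg (c m)) (norm_nonneg (c (k - m))))]

theorem summable_and_tsum_latticeTransport_sq_le {c : ℤ × ℤ → ℂ} {s : ℕ} (h0 : c 0 = 0)
    (hs : Summable fun k => waveNum k ^ 4 * ‖c k‖ ^ 2)
    (hS : Summable fun k => waveNum k ^ (2 * (s + 1)) * ‖c k‖ ^ 2) :
    Summable (fun k => waveNum k ^ (2 * s) * ‖latticeTransport c k‖ ^ 2) ∧
      ∑' k, waveNum k ^ (2 * s) * ‖latticeTransport c k‖ ^ 2 ≤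
        4 ^ (s + 1) * (∑' k, ((waveNum k ^ 2)⁻¹) ^ 2) *
          (∑' k, waveNum k ^ 4 * ‖c k‖ ^ 2) * ∑' k, waveNum k ^ (2 * (s + 1)) * ‖c k‖ ^ 2 := by
  have hsq (k) : waveNum k ^ (2 * (s + 1)) * ‖c k‖ ^ 2 = (waveNum k ^ (s + 1) * ‖c k‖) ^ 2 := by
    ring
  simp only [hsq] at hS ⊢
  obtain ⟨hnorm, hnorm_le⟩ := summable_norm_and_sq_tsum_norm_le h0 hs
  obtain ⟨hconv, hconv_le⟩ :=
    summable_and_tsum_sq_convolution_le (fun k => norm_nonneg (c k)) hnorm hS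
  have hle (k) : waveNum k ^ (2 * s) * ‖latticeTransport c k‖ ^ 2 ≤ 4 ^ (s + 1) *
      (∑' m, ‖c m‖ * (waveNum (k - m) ^ (s + 1) * ‖c (k - m)‖)) ^ 2 := by
    have hk := waveNum_nonneg k
    calc waveNum k ^ (2 * s) * ‖latticeTransport c k‖ ^ 2
        = (waveNum k ^ s * ‖latticeTransport c k‖) ^ 2 := by ring
      _ ≤ _ := pow_le_pow_left₀ (by positivity)
        (waveNum_pow_mul_norm_latticeTransport_le h0 hs hS k) 2
      _ = _ := by rw [mul_pow, ← pow_mul, mul_comm (s + 1) 2, pow_mul]; norm_num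
  have hsum := Summable.of_nonneg_of_le (fun k => by have := waveNum_nonneg k; positivity) hle
    (hconv.mul_left _)
  refine ⟨hsum, (hsum.tsum_le_tsum hle (hconv.mul_left _)).trans ?_⟩
  rw [tsum_mul_left, mul_assoc, mul_assoc, ← mul_assoc (tsum _)]
  gcongr
  exact hconv_le.trans (mul_le_mul_of_nonneg_right hnorm_le (tsum_nonneg fun k => sq_nonneg _))

/-! ### Divergence-free fields and their lattice extension -/

instance : Countable Freq := inferInstanceAs (Countable {k : ℤ × ℤ // k ≠ 0})

lemma waveNum_freq_pos (k : Freq) : 0 < waveNum k.1 := zero_lt_one.trans_le (one_le_waveNum k.2)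

lemma lam_eq_waveNum_sq (k : Freq) : lam k = waveNum k.1 ^ 2 := by
  rw [waveNum_sq, lam, knormSq]

lemma lam_rpow_natCast (k : Freq) (n : ℕ) : lam k ^ (n : ℝ) = waveNum k.1 ^ (2 * n) := by
  rw [Real.rpow_natCast, lam_eq_waveNum_sq, pow_mul]

lemma waveNum_eq_mul_sqrt_knormSq (k : Freq) :
    waveNum k.1 = 2 * Real.pi * √(knormSq k) := by
  rw [← Real.sqrt_sq (waveNum_nonneg k.1), ← lam_eq_waveNum_sq, lam,
    show 4 * Real.pi ^ 2 = (2 * Real.pi) ^ 2 by ring, Real.sqrt_mul (sq_nonneg _),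
    Real.sqrt_sq Real.two_pi_pos.le]

lemma freq_val_injective : Function.Injective fun k : Freq => k.1 := Subtype.val_injective

lemma eq_zero_of_notMem_range_freq_val {x : ℤ × ℤ} (hx : x ∉ range fun k : Freq => k.1) :
    x = 0 :=
  by_contra fun h => hx ⟨⟨x, h⟩, rfl⟩

section FreqSums

variable {E : Type*} [AddCommMonoid E] [TopologicalSpace E] {F : ℤ × ℤ → E}

lemma summable_freq_iff (h0 : F 0 = 0) : (Summable fun k : Freq => F k.1) ↔ Summable F :=
  freq_val_injective.summable_iff fun _ hx => by rw [eq_zero_of_notMem_range_freq_val hx, h0]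

lemma tsum_freq (h0 : F 0 = 0) : ∑' k : Freq, F k.1 = ∑' k, F k :=
  freq_val_injective.tsum_eq fun x hx => by
    by_contra hrange
    exact hx (by rw [eq_zero_of_notMem_range_freq_val hrange, h0])

end FreqSums

/-- The extension by zero of the coefficients of a mean-zero field to the full lattice. -/
def extendZero (c : Coef) : ℤ × ℤ → ℂ := Function.extend (fun k : Freq => k.1) c 0

lemma extendZero_zero (c : Coef) : extendZero c 0 = 0 :=
  Function.extend_apply' _ _ _ fun ⟨k, hk⟩ => k.2 hk

lemma extendZero_val (c : Coef) (k : Freq) : extendZero c k.1 = c k :=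
  freq_val_injective.extend_apply c 0 k

lemma extendZero_of_ne (c : Coef) {x : ℤ × ℤ} (hx : x ≠ 0) : extendZero c x = c ⟨x, hx⟩ :=
  extendZero_val c ⟨x, hx⟩

lemma IsReal.extendZero_neg {c : Coef} (hc : IsReal c) (k : ℤ × ℤ) :
    extendZero c (-k) = -(starRingEnd ℂ) (extendZero c k) := by
  rcases eq_or_ne k 0 with rfl | hk
  · rw [neg_zero, extendZero_zero, map_zero, neg_zero]
  · rw [extendZero_of_ne c hk, extendZero_of_ne c (neg_ne_zero.mpr hk)]
    exact hc ⟨k, hk⟩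

lemma transportSymbol_eq (m n k : Freq) (h : m.1 + n.1 = k.1) :
    transportSymbol m.1 n.1 =
      2 * Real.pi * (dotR (evec m) (fvec n) * dotR (evec n) (evec k)) := by
  have hsqrt (x : Freq) : √(knormSq x) ≠ 0 := fun hx =>
    (waveNum_freq_pos x).ne' (by rw [waveNum_eq_mul_sqrt_knormSq, hx, mul_zero])
  have hm := hsqrt m
  have hn := hsqrt n
  have hk := hsqrt k
  rw [transportSymbol, h, waveNum_eq_mul_sqrt_knormSq m, waveNum_eq_mul_sqrt_knormSq n,
    waveNum_eq_mul_sqrt_knormSq k]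
  simp only [dotR, evec, fvec, waveCross, waveDot, waveVec]
  simp only [Complex.ofReal_mul, Complex.ofReal_ofNat, ne_eq, map_mul, Complex.conj_ofReal,
    map_add, map_intCast, Complex.conj_I, mul_neg, Complex.mul_im, Complex.mul_re,
    Complex.conj_re, Complex.re_ofNat, Complex.ofReal_re, Complex.conj_im, Complex.im_ofNat,
    neg_zero, Complex.ofReal_im, mul_zero, sub_zero, Complex.add_re, Complex.intCast_re,
    Complex.neg_re, Complex.I_re, Complex.intCast_im, Complex.I_im, mul_one, sub_self, add_zero,
    zero_mul, Complex.add_im, Complex.neg_im, zero_add, neg_mul, neg_add_rev, neg_neg,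
    sub_neg_eq_add]
  field_simp
  ring

lemma Bc_eq_latticeTransport (c : Coef) (k : Freq) :
    Bc c c k = latticeTransport (extendZero c) k.1 := by
  rw [Bc, latticeTransport, mul_comm ((2 * Real.pi : ℝ) : ℂ), mul_assoc, ← tsum_mul_left,
    ← tsum_freq (by simp only [extendZero_zero, zero_mul])]
  congr 1
  refine tsum_congr fun m => ?_
  by_cases h : k.1 - m.1 = 0
  · rw [dif_neg (not_not.mpr h)]
    simp only [h, extendZero_zero, mul_zero, zero_mul]
  · have hsymbol := transportSymbol_eq m ⟨k.1 - m.1, h⟩ k (add_sub_cancel m.1 k.1)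
    dsimp only at hsymbol
    rw [dif_pos h, extendZero_val, extendZero_of_ne c h, hsymbol]
    push_cast
    ring

lemma latticeTransport_zero (c : ℤ × ℤ → ℂ) : latticeTransport c 0 = 0 := by
  simp only [latticeTransport, transportSymbol, add_sub_cancel, waveNum_zero, mul_zero, div_zero,
    Complex.ofReal_zero, tsum_zero]

lemma extendZero_Bc (c : Coef) : extendZero (Bc c c) = latticeTransport (extendZero c) := by
  funext x
  rcases eq_or_ne x 0 with rfl | hx
  · rw [extendZero_zero, latticeTransport_zero]
  · exact (extendZero_of_ne _ hx).trans (Bc_eq_latticeTransport c ⟨x, hx⟩)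

/-! ### Sobolev norms of integer order -/

/-- Finiteness of the `Ḣⁿ` norm for integer `n`, in terms of wave numbers. -/
def HasSobolev (n : ℕ) (c : Coef) : Prop := Summable fun k => waveNum k.1 ^ (2 * n) * ‖c k‖ ^ 2

/-- The squared `Ḣⁿ` norm for integer `n`, in terms of wave numbers. -/
def sobolevSq (n : ℕ) (c : Coef) : ℝ := ∑' k, waveNum k.1 ^ (2 * n) * ‖c k‖ ^ 2

lemma finH_natCast_iff {n : ℕ} {c : Coef} : FinH n c ↔ HasSobolev n c := by
  simp only [FinH, HasSobolev, lam_rpow_natCast]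

lemma hSq_natCast (n : ℕ) (c : Coef) : hSq n c = sobolevSq n c := by
  simp only [hSq, sobolevSq, lam_rpow_natCast]

section Sobolev

variable {n m : ℕ} {c : Coef}

lemma waveNum_pow_mul_sq_nonneg (n : ℕ) (c : Coef) (k : Freq) :
    0 ≤ waveNum k.1 ^ (2 * n) * ‖c k‖ ^ 2 :=
  mul_nonneg (pow_nonneg (waveNum_nonneg _) _) (sq_nonneg _)

lemma sobolevSq_nonneg (n : ℕ) (c : Coef) : 0 ≤ sobolevSq n c :=
  tsum_nonneg (waveNum_pow_mul_sq_nonneg n c)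

lemma waveNum_pow_mul_sq_le_of_le (h : n ≤ m) (k : Freq) :
    waveNum k.1 ^ (2 * n) * ‖c k‖ ^ 2 ≤ waveNum k.1 ^ (2 * m) * ‖c k‖ ^ 2 :=
  mul_le_mul_of_nonneg_right (pow_le_pow_right₀ (one_le_waveNum k.2) (by omega)) (sq_nonneg _)

lemma HasSobolev.mono (h : n ≤ m) (hc : HasSobolev m c) : HasSobolev n c :=
  .of_nonneg_of_le (waveNum_pow_mul_sq_nonneg n c) (waveNum_pow_mul_sq_le_of_le h) hc

lemma HasSobolev.sobolevSq_le (h : n ≤ m) (hc : HasSobolev m c) :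
    sobolevSq n c ≤ sobolevSq m c :=
  (hc.mono h).tsum_le_tsum (waveNum_pow_mul_sq_le_of_le h) hc

lemma hasSobolev_iff_extendZero :
    HasSobolev n c ↔ Summable fun k => waveNum k ^ (2 * n) * ‖extendZero c k‖ ^ 2 := by
  rw [HasSobolev, ← summable_freq_iff (by simp only [extendZero_zero, norm_zero, ne_eq,
    OfNat.ofNat_ne_zero, not_false_eq_true, zero_pow, mul_zero])]
  simp only [extendZero_val]

lemma HasSobolev.summable_extendZero_two (hc : HasSobolev 2 c) :
    Summable fun k => waveNum k ^ 4 * ‖extendZero c k‖ ^ 2 := by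
  simpa only [Nat.reduceMul] using hasSobolev_iff_extendZero.mp hc

lemma sobolevSq_eq_extendZero :
    sobolevSq n c = ∑' k, waveNum k ^ (2 * n) * ‖extendZero c k‖ ^ 2 := by
  rw [sobolevSq, ← tsum_freq (by simp only [extendZero_zero, norm_zero, ne_eq,
    OfNat.ofNat_ne_zero, not_false_eq_true, zero_pow, mul_zero])]
  simp only [extendZero_val]

end Sobolev

/-- The constant in the product estimate for the transport term. -/
def productConst (s : ℕ) : ℝ := 4 ^ (s + 1) * ∑' k : ℤ × ℤ, ((waveNum k ^ 2)⁻¹) ^ 2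

lemma productConst_nonneg (s : ℕ) : 0 ≤ productConst s :=
  mul_nonneg (by positivity) (tsum_nonneg fun _ => sq_nonneg _)

section Transport

variable {s : ℕ} {c : Coef}

lemma HasSobolev.transport (h2 : HasSobolev 2 c) (hs : HasSobolev (s + 1) c) :
    HasSobolev s (Bc c c) := by
  rw [hasSobolev_iff_extendZero, extendZero_Bc]
  exact (summable_and_tsum_latticeTransport_sq_le (extendZero_zero c)
    h2.summable_extendZero_two (hasSobolev_iff_extendZero.mp hs)).1

lemma HasSobolev.sobolevSq_Bc_le (h2 : HasSobolev 2 c) (hs : HasSobolev (s + 1) c) :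
    sobolevSq s (Bc c c) ≤ productConst s * sobolevSq 2 c * sobolevSq (s + 1) c := by
  have h := (summable_and_tsum_latticeTransport_sq_le (extendZero_zero c)
    h2.summable_extendZero_two (hasSobolev_iff_extendZero.mp hs)).2
  rw [← extendZero_Bc, ← sobolevSq_eq_extendZero, ← sobolevSq_eq_extendZero] at h
  rwa [productConst, sobolevSq_eq_extendZero (n := 2)]

end Transport

/-! ### Truncated Sobolev weights -/

/-- The weight `|k|ᵇ`, frozen above the wave number `N` to make it bounded. -/
def truncWeight (N : ℝ) (b : ℕ) (k : ℤ × ℤ) : ℝ := min (waveNum k) N ^ b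

lemma abs_min_pow_sub_min_pow_mul_min_le (b : ℕ) {N p q d : ℝ} (hN : 0 ≤ N) (hp : 0 ≤ p)
    (hq : 0 ≤ q) (hd : |p - q| ≤ d) :
    |min p N ^ b - min q N ^ b| * min q p ≤ b * d * (min q N ^ b + min p N ^ b) := by
  wlog hpq : p ≤ q generalizing p q with hwlog
  · rw [abs_sub_comm, min_comm q p, add_comm (min q N ^ b)]
    exact hwlog hq hp (by rwa [abs_sub_comm]) (le_of_not_ge hpq)
  have hd0 : 0 ≤ d := (abs_nonneg _).trans hd
  have hpN : 0 ≤ min p N := le_min hp hN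
  have hqN : 0 ≤ min q N := le_min hq hN
  have hle : min p N ≤ min q N := min_le_min_right N hpq
  rcases b.eq_zero_or_pos with rfl | hb
  · simp only [pow_zero, sub_self, abs_zero, zero_mul, CharP.cast_eq_zero, le_refl]
  have hdiff : |min p N - min q N| * min q p ≤ d * min q N := by
    rw [min_eq_right hpq]
    rcases le_total N p with hNp | hpN'
    · rw [min_eq_right hNp, min_eq_right (hNp.trans hpq), sub_self, abs_zero, zero_mul]
      exact mul_nonneg hd0 hN
    · rw [min_eq_left hpN'] at hle ⊢
      refine mul_le_mul ?_ hle hp hd0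
      rw [abs_le] at hd ⊢
      exact ⟨by linarith [min_le_left q N], by linarith⟩
  calc |min p N ^ b - min q N ^ b| * min q p
      ≤ |min p N - min q N| * b * max |min p N| |min q N| ^ (b - 1) * min q p :=
        mul_le_mul_of_nonneg_right (abs_pow_sub_pow_le _ _ b) (le_min hq hp)
    _ = b * (|min p N - min q N| * min q p) * min q N ^ (b - 1) := by
        rw [abs_of_nonneg hpN, abs_of_nonneg hqN, max_eq_right hle]
        ring
    _ ≤ b * (d * min q N) * min q N ^ (b - 1) := by gcongr
    _ = b * d * min q N ^ b := by
        rw [mul_assoc, mul_assoc d, mul_pow_sub_one hb.ne', mul_assoc]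
    _ ≤ b * d * (min q N ^ b + min p N ^ b) := by
        gcongr
        exact le_add_of_nonneg_right (pow_nonneg hpN b)

lemma min_pow_le_of_le_add (b : ℕ) {N p q r : ℝ} (hN : 0 ≤ N) (hp : 0 ≤ p) (hq : 0 ≤ q)
    (hr : 0 ≤ r) (h : p ≤ q + r) : min p N ^ b ≤ 2 ^ b * (min q N ^ b + min r N ^ b) := by
  have hqN : 0 ≤ min q N := le_min hq hN
  have hrN : 0 ≤ min r N := le_min hr hN
  have hmin : min p N ≤ min q N + min r N := by grind
  calc min p N ^ b ≤ (min q N + min r N) ^ b := pow_le_pow_left₀ (le_min hp hN) hmin b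
    _ ≤ 2 ^ (b - 1) * (min q N ^ b + min r N ^ b) := add_pow_le hqN hrN b
    _ ≤ 2 ^ b * (min q N ^ b + min r N ^ b) := by
      gcongr
      exacts [one_le_two, b.sub_le 1]

lemma isCommutatorWeight_truncWeight {N : ℝ} (hN : 0 ≤ N) (b : ℕ) :
    IsCommutatorWeight (truncWeight N b) (N ^ b) b (2 ^ b) where
  nonneg k := pow_nonneg (le_min (waveNum_nonneg k) hN) b
  le k := pow_le_pow_left₀ (le_min (waveNum_nonneg k) hN) (min_le_right _ _) b
  even k := by rw [truncWeight, waveNum_neg, truncWeight]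
  commutator m n := abs_min_pow_sub_min_pow_mul_min_le b hN (waveNum_nonneg _) (waveNum_nonneg _)
    (abs_sub_le_iff.mpr ⟨by linarith [waveNum_add_le m n], by linarith [waveNum_right_le m n]⟩)
  add_le m n := min_pow_le_of_le_add b hN (waveNum_nonneg _) (waveNum_nonneg _)
    (waveNum_nonneg _) (waveNum_add_le m n)

theorem abs_tsum_truncWeight_Bc_le {N δ : ℝ} {c : Coef} (hN : 0 ≤ N) (b : ℕ)
    (hs : HasSobolev 2 c) (hc : IsReal c) (hδ : 0 < δ) :
    |∑' k : Freq, waveNum k.1 ^ 2 * truncWeight N b k.1 ^ 2 *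
        (Bc c c k * (starRingEnd ℂ) (c k)).re| ≤
      900 * (b * (2 ^ b + 1)) ^ 2 / δ * sobolevSq 1 c *
        (∑' k : Freq, waveNum k.1 ^ 2 * truncWeight N b k.1 ^ 2 * ‖c k‖ ^ 2) +
      δ * ∑' k : Freq, waveNum k.1 ^ 4 * truncWeight N b k.1 ^ 2 * ‖c k‖ ^ 2 := by
  have hmain := (isCommutatorWeight_truncWeight hN b).abs_tsum_latticeTransport_le
    (Nat.cast_nonneg b) (by positivity) (extendZero_zero c) hs.summable_extendZero_two
    hc.extendZero_neg hδ
  have hone : ∑' k, waveNum k ^ 2 * ‖extendZero c k‖ ^ 2 = sobolevSq 1 c := by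
    rw [sobolevSq_eq_extendZero]
  rw [hone, ← tsum_freq (by simp only [waveNum_zero, ne_eq, OfNat.ofNat_ne_zero,
    not_false_eq_true, zero_pow, zero_mul]), ← tsum_freq (by simp only [waveNum_zero, ne_eq,
    OfNat.ofNat_ne_zero, not_false_eq_true, zero_pow, zero_mul]), ← tsum_freq (by simp only
    [waveNum_zero, ne_eq, OfNat.ofNat_ne_zero, not_false_eq_true, zero_pow, zero_mul])] at hmain
  simpa only [extendZero_val, ← Bc_eq_latticeTransport] using hmain

/-! ### Interchange of series and integrals -/

section SeriesIntegral

variable {α ι E : Type*} [MeasurableSpace α] {μ : Measure α}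
  [NormedAddCommGroup E] {F : ι → α → E}

lemma integrable_of_integrable_tsum_norm (hF : ∀ i, AEStronglyMeasurable (F i) μ)
    (hs : ∀ᵐ t ∂μ, Summable fun i => ‖F i t‖) (hint : Integrable (fun t => ∑' i, ‖F i t‖) μ)
    (i : ι) : Integrable (F i) μ :=
  hint.mono' (hF i) (hs.mono fun _ ht => ht.le_tsum i fun _ _ => norm_nonneg _)

variable [Countable ι]

lemma aestronglyMeasurable_tsum (hF : ∀ i, AEStronglyMeasurable (F i) μ)
    (hs : ∀ᵐ t ∂μ, Summable fun i => F i t) :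
    AEStronglyMeasurable (fun t => ∑' i, F i t) μ :=
  aestronglyMeasurable_of_tendsto_ae (Filter.atTop : Filter (Finset ι))
    (f := fun s t => ∑ i ∈ s, F i t)
    (fun s => Finset.aestronglyMeasurable_fun_sum s fun i _ => hF i) (hs.mono fun _ ht => ht.hasSum)

lemma integrable_tsum_norm_of_le {G : α → ℝ} (hF : ∀ i, AEStronglyMeasurable (F i) μ)
    (hs : ∀ᵐ t ∂μ, Summable fun i => ‖F i t‖) (hle : ∀ᵐ t ∂μ, ∑' i, ‖F i t‖ ≤ G t)
    (hG : Integrable G μ) : Integrable (fun t => ∑' i, ‖F i t‖) μ := by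
  refine hG.mono' (aestronglyMeasurable_tsum (fun i => (hF i).norm) hs) ?_
  filter_upwards [hle] with t ht
  rwa [Real.norm_of_nonneg (tsum_nonneg fun i => norm_nonneg _)]

lemma hasSum_integral_of_integrable_tsum_norm [NormedSpace ℝ E] [CompleteSpace E]
    (hF : ∀ i, AEStronglyMeasurable (F i) μ) (hs : ∀ᵐ t ∂μ, Summable fun i => ‖F i t‖)
    (hint : Integrable (fun t => ∑' i, ‖F i t‖) μ) :
    HasSum (fun i => ∫ t, F i t ∂μ) (∫ t, ∑' i, F i t ∂μ) :=
  hasSum_integral_of_dominated_convergence (fun i t => ‖F i t‖) hF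
    (fun _ => Filter.Eventually.of_forall fun _ => le_rfl) hs hint
    (hs.mono fun _ ht => ht.of_norm.hasSum)

lemma lintegral_tsum_enorm_ne_top (hF : ∀ i, Integrable (F i) μ)
    (hsum : Summable fun i => ∫ t, ‖F i t‖ ∂μ) : ∫⁻ t, ∑' i, ‖F i t‖ₑ ∂μ ≠ ⊤ := by
  rw [lintegral_tsum fun i => (hF i).1.enorm]
  simpa only [ofReal_integral_norm_eq_lintegral_enorm (hF _)] using hsum.tsum_ofReal_ne_top

lemma ae_summable_norm_of_summable_integral (hF : ∀ i, Integrable (F i) μ)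
    (hsum : Summable fun i => ∫ t, ‖F i t‖ ∂μ) : ∀ᵐ t ∂μ, Summable fun i => ‖F i t‖ := by
  filter_upwards [ae_lt_top' (AEMeasurable.tsum fun i => (hF i).1.enorm)
    (lintegral_tsum_enorm_ne_top hF hsum)] with t ht
  simpa only [toReal_enorm] using ENNReal.summable_toReal ht.ne

lemma integrable_tsum_of_summable_integral [CompleteSpace E] (hF : ∀ i, Integrable (F i) μ)
    (hsum : Summable fun i => ∫ t, ‖F i t‖ ∂μ) : Integrable (fun t => ∑' i, F i t) μ := by
  have hae := ae_summable_norm_of_summable_integral hF hsum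
  refine ⟨aestronglyMeasurable_tsum (fun i => (hF i).1) (hae.mono fun _ ht => ht.of_norm), ?_⟩
  exact (lintegral_mono fun _ => enorm_tsum_le_tsum_enorm).trans_lt
    (lintegral_tsum_enorm_ne_top hF hsum).lt_top

end SeriesIntegral

lemma integrable_and_integral_tsum_le {α ι : Type*} [MeasurableSpace α] {μ : Measure α}
    [Countable ι] {F : ι → α → ℝ} {K : ℝ} (h0 : ∀ i t, 0 ≤ F i t) (hF : ∀ i, Integrable (F i) μ)
    (hK : ∀ s : Finset ι, ∑ i ∈ s, ∫ t, F i t ∂μ ≤ K) :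
    (∀ᵐ t ∂μ, Summable fun i => F i t) ∧ Integrable (fun t => ∑' i, F i t) μ ∧
      ∫ t, ∑' i, F i t ∂μ ≤ K := by
  have hnorm (i : ι) (t : α) : ‖F i t‖ = F i t := Real.norm_of_nonneg (h0 i t)
  have hsum : Summable fun i => ∫ t, F i t ∂μ :=
    summable_of_sum_le (fun i => integral_nonneg (h0 i)) hK
  have hsumNorm : Summable fun i => ∫ t, ‖F i t‖ ∂μ := by simpa only [hnorm] using hsum
  have hae := ae_summable_norm_of_summable_integral hF hsumNorm
  refine ⟨by simpa only [hnorm] using hae, integrable_tsum_of_summable_integral hF hsumNorm, ?_⟩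
  rw [← integral_tsum_of_summable_integral_norm hF hsumNorm]
  exact hsum.tsum_le_of_sum_le hK

/-! ### Elementary properties of solutions -/

lemma sq_norm_sub_le {E : Type*} [SeminormedAddCommGroup E] (x y : E) :
    ‖x - y‖ ^ 2 ≤ 2 * (‖x‖ ^ 2 + ‖y‖ ^ 2) :=
  (pow_le_pow_left₀ (norm_nonneg _) (norm_sub_le x y) 2).trans add_sq_le

lemma sq_norm_le_sub_add {E : Type*} [SeminormedAddCommGroup E] (x y : E) :
    ‖x‖ ^ 2 ≤ 2 * (‖x - y‖ ^ 2 + ‖y‖ ^ 2) := by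
  simpa only [sub_neg_eq_add, sub_add_cancel, norm_neg] using sq_norm_sub_le (x - y) (-y)

section SobolevDifferences

variable {n : ℕ} {c d : Coef}

lemma waveNum_pow_mul_sq_sub_le (n : ℕ) (c d : Coef) (k : Freq) :
    waveNum k.1 ^ (2 * n) * ‖(c - d) k‖ ^ 2 ≤
      2 * (waveNum k.1 ^ (2 * n) * ‖c k‖ ^ 2 + waveNum k.1 ^ (2 * n) * ‖d k‖ ^ 2) := by
  rw [← mul_add, mul_left_comm]
  exact mul_le_mul_of_nonneg_left (sq_norm_sub_le (c k) (d k)) (pow_nonneg (waveNum_nonneg _) _)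

lemma HasSobolev.sub (hc : HasSobolev n c) (hd : HasSobolev n d) : HasSobolev n (c - d) :=
  .of_nonneg_of_le (waveNum_pow_mul_sq_nonneg n _) (waveNum_pow_mul_sq_sub_le n c d)
    ((Summable.add hc hd).mul_left 2)

lemma HasSobolev.sobolevSq_sub_le (hc : HasSobolev n c) (hd : HasSobolev n d) :
    sobolevSq n (c - d) ≤ 2 * (sobolevSq n c + sobolevSq n d) := by
  rw [sobolevSq, sobolevSq, sobolevSq, ← Summable.tsum_add hc hd, ← tsum_mul_left]
  exact (hc.sub hd).tsum_le_tsum (waveNum_pow_mul_sq_sub_le n c d)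
    ((Summable.add hc hd).mul_left 2)

lemma HasSobolev.sobolevSq_le_sub_add (hc : HasSobolev n c) (hd : HasSobolev n d) :
    sobolevSq n c ≤ 2 * (sobolevSq n (c - d) + sobolevSq n d) := by
  have hneg : sobolevSq n (0 - d) = sobolevSq n d := by
    simp only [sobolevSq, zero_sub, Pi.neg_apply, norm_neg]
  have hd' : HasSobolev n (0 - d) := by
    simpa only [HasSobolev, zero_sub, Pi.neg_apply, norm_neg] using hd
  have h := (hc.sub hd).sobolevSq_sub_le hd'
  rwa [hneg, zero_sub, sub_neg_eq_add, sub_add_cancel] at h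

lemma HasSobolev.sq_norm_le (hc : HasSobolev n c) (k : Freq) : ‖c k‖ ^ 2 ≤ sobolevSq n c := by
  simpa only [mul_zero, pow_zero, one_mul, sobolevSq] using
    (waveNum_pow_mul_sq_le_of_le n.zero_le k).trans
      (hc.le_tsum k fun j _ => waveNum_pow_mul_sq_nonneg n c j)

end SobolevDifferences

lemma hN_natCast (n : ℕ) (c : Coef) : hN n c = √(sobolevSq n c) := by rw [hN, hSq_natCast]

lemma contH_natCast_iff {n : ℕ} {T : ℝ} {u : ℝ → Coef} :
    ContH n T u ↔ ∀ t ∈ Icc 0 T,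
      Filter.Tendsto (fun s => sobolevSq n (u s - u t)) (nhdsWithin t (Icc 0 T)) (nhds 0) := by
  refine forall₂_congr fun t _ => ?_
  have hsqrt : Filter.Tendsto (fun s => sobolevSq n (u s - u t)) (nhdsWithin t (Icc 0 T))
      (nhds 0) ↔ Filter.Tendsto (fun s => hN n (u s - u t)) (nhdsWithin t (Icc 0 T))
      (nhds 0) := by
    constructor <;> intro h
    · simpa only [hN_natCast, Real.sqrt_zero] using h.sqrt
    · simpa only [hN_natCast, Real.sq_sqrt (sobolevSq_nonneg _ _), ne_eq, OfNat.ofNat_ne_zero,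
        not_false_eq_true, zero_pow] using h.pow 2
  rw [hsqrt, Metric.tendsto_nhdsWithin_nhds]
  simp only [Real.dist_eq, sub_zero, hN_natCast, abs_of_nonneg (Real.sqrt_nonneg _)]

namespace IsNSSol

variable {T ν t : ℝ} {f θ : Coef} {u : ℝ → Coef}

lemma hasSobolev_two (h : IsNSSol ν f T θ u) (ht : t ∈ Ioc 0 T) : HasSobolev 2 (u t) :=
  finH_natCast_iff.mp (by exact_mod_cast (h.memL2H2.1 t ht).2)

lemma hasSobolev_one (h : IsNSSol ν f T θ u) (hθ : HasSobolev 1 θ) (ht : t ∈ Icc 0 T) :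
    HasSobolev 1 (u t) := by
  rcases ht.1.eq_or_lt with rfl | hpos
  · rwa [h.init]
  · exact (h.hasSobolev_two ⟨hpos, ht.2⟩).mono one_le_two

lemma integrableOn_sobolevSq_two (h : IsNSSol ν f T θ u) :
    IntegrableOn (fun t => sobolevSq 2 (u t)) (Ioc 0 T) := by
  simp only [← hSq_natCast]
  exact_mod_cast h.memL2H2.2

lemma tendsto_sobolevSq_one (h : IsNSSol ν f T θ u) (ht : t ∈ Icc 0 T) :
    Filter.Tendsto (fun s => sobolevSq 1 (u s - u t)) (nhdsWithin t (Icc 0 T)) (nhds 0) :=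
  contH_natCast_iff.mp (by exact_mod_cast h.contH1) t ht

lemma bddAbove_sobolevSq_one (h : IsNSSol ν f T θ u) (hθ : HasSobolev 1 θ) :
    BddAbove ((fun t => sobolevSq 1 (u t)) '' Icc 0 T) := by
  refine isCompact_Icc.induction_on (p := fun s => BddAbove ((fun t => sobolevSq 1 (u t)) '' s))
    (by rw [image_empty]; exact bddAbove_empty) (fun s t hst ht => ht.mono (image_mono hst))
    (fun s t hs ht => by rw [image_union]; exact hs.union ht) fun t ht => ?_
  refine ⟨_, (h.tendsto_sobolevSq_one ht).eventually_le_const one_pos |>.and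
    self_mem_nhdsWithin, 2 * (1 + sobolevSq 1 (u t)), ?_⟩
  rintro _ ⟨s, ⟨hclose, hs⟩, rfl⟩
  have hsplit := (h.hasSobolev_one hθ hs).sobolevSq_le_sub_add (h.hasSobolev_one hθ ht)
  dsimp only
  linarith

lemma continuousOn_apply (h : IsNSSol ν f T θ u) (hθ : HasSobolev 1 θ) (k : Freq) :
    ContinuousOn (fun t => u t k) (Icc 0 T) := fun t ht => by
  have hsq : Filter.Tendsto (fun s => ‖u s k - u t k‖ ^ 2) (nhdsWithin t (Icc 0 T)) (nhds 0) :=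
    squeeze_zero' (.of_forall fun _ => sq_nonneg _)
      (Filter.eventually_of_mem self_mem_nhdsWithin fun s hs =>
        ((h.hasSobolev_one hθ hs).sub (h.hasSobolev_one hθ ht)).sq_norm_le k)
      (h.tendsto_sobolevSq_one ht)
  refine tendsto_iff_norm_sub_tendsto_zero.mpr ?_
  simpa only [Real.sqrt_sq (norm_nonneg _), Real.sqrt_zero] using hsq.sqrt

lemma aestronglyMeasurable_apply (h : IsNSSol ν f T θ u) (hθ : HasSobolev 1 θ) (k : Freq) :
    AEStronglyMeasurable (fun t => u t k) (volume.restrict (Ioc 0 T)) :=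
  ((h.continuousOn_apply hθ k).mono Ioc_subset_Icc_self).aestronglyMeasurable measurableSet_Ioc

lemma integrableOn_sq_norm_apply (h : IsNSSol ν f T θ u) (hθ : HasSobolev 1 θ) (k : Freq) :
    IntegrableOn (fun t => ‖u t k‖ ^ 2) (Ioc 0 T) :=
  ((h.continuousOn_apply hθ k).norm.pow 2).integrableOn_Icc.mono_set Ioc_subset_Icc_self

-- The equation expresses `Bc` through `u` and `du/dt`, and derivatives are always measurable.
lemma aestronglyMeasurable_Bc_apply (h : IsNSSol ν f T θ u) (hθ : HasSobolev 1 θ) (k : Freq) :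
    AEStronglyMeasurable (fun t => Bc (u t) (u t) k) (volume.restrict (Ioc 0 T)) := by
  have hmeas : AEStronglyMeasurable
      (fun t => f k - ((ν * lam k : ℝ) : ℂ) * u t k - _root_.deriv (fun s => u s k) t)
      (volume.restrict (Ioc 0 T)) :=
    (aestronglyMeasurable_const.sub ((h.aestronglyMeasurable_apply hθ k).const_mul _)).sub
      (measurable_deriv _).aestronglyMeasurable
  refine hmeas.congr ?_
  filter_upwards [ae_restrict_mem measurableSet_Ioc] with t ht
  rw [(h.deriv k t ht).deriv]
  ring

end IsNSSol

/-! ### The modal energy balance -/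

/-- The rate of change of `‖u_k‖²` along a solution of the Navier–Stokes equations passing
through the state `c`. -/
def modalEnergyRate (ν : ℝ) (f c : Coef) (k : Freq) : ℝ :=
  2 * ((f k - ((ν * lam k : ℝ) : ℂ) * c k - Bc c c k) * (starRingEnd ℂ) (c k)).re

lemma abs_re_mul_conj_le (x y : ℂ) : |(x * (starRingEnd ℂ) y).re| ≤ ‖x‖ * ‖y‖ :=
  (Complex.abs_re_le_norm _).trans_eq (by rw [norm_mul, Complex.norm_conj])

section ModalEnergy

variable {ν : ℝ} {f c : Coef}

lemma modalEnergyRate_eq (ν : ℝ) (f c : Coef) (k : Freq) :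
    modalEnergyRate ν f c k = 2 * (f k * (starRingEnd ℂ) (c k)).re -
      2 * ν * waveNum k.1 ^ 2 * ‖c k‖ ^ 2 - 2 * (Bc c c k * (starRingEnd ℂ) (c k)).re := by
  rw [modalEnergyRate, ← lam_eq_waveNum_sq, sub_mul, sub_mul, mul_assoc, Complex.mul_conj,
    Complex.sub_re, Complex.sub_re, ← Complex.ofReal_mul, Complex.ofReal_re,
    Complex.normSq_eq_norm_sq]
  ring

lemma waveNum_sq_mul_abs_modalEnergyRate_le (hν : 0 ≤ ν) (f c : Coef) (k : Freq) :
    waveNum k.1 ^ 2 * |modalEnergyRate ν f c k| ≤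
      waveNum k.1 ^ (2 * 0) * ‖f k‖ ^ 2 + (2 + 2 * ν) * (waveNum k.1 ^ (2 * 2) * ‖c k‖ ^ 2) +
        waveNum k.1 ^ (2 * 0) * ‖Bc c c k‖ ^ 2 := by
  have hforce := abs_le.mp (abs_re_mul_conj_le (f k) (c k))
  have htransport := abs_le.mp (abs_re_mul_conj_le (Bc c c k) (c k))
  have hrate : |modalEnergyRate ν f c k| ≤ 2 * (‖f k‖ * ‖c k‖) +
      2 * ν * waveNum k.1 ^ 2 * ‖c k‖ ^ 2 + 2 * (‖Bc c c k‖ * ‖c k‖) := by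
    have hvisc : 0 ≤ 2 * ν * waveNum k.1 ^ 2 * ‖c k‖ ^ 2 := by positivity
    rw [modalEnergyRate_eq, abs_le]
    constructor <;> linarith
  have hf := two_mul_le_add_sq ‖f k‖ (waveNum k.1 ^ 2 * ‖c k‖)
  have hB := two_mul_le_add_sq ‖Bc c c k‖ (waveNum k.1 ^ 2 * ‖c k‖)
  calc waveNum k.1 ^ 2 * |modalEnergyRate ν f c k|
      ≤ waveNum k.1 ^ 2 * _ := mul_le_mul_of_nonneg_left hrate (sq_nonneg _)
    _ ≤ _ := by
      rw [mul_zero, pow_zero, one_mul, one_mul]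
      linear_combination hf + hB

lemma summable_waveNum_sq_mul_abs_modalEnergyRate (hν : 0 ≤ ν) (hf : HasSobolev 0 f)
    (hc : HasSobolev 2 c) : Summable fun k => waveNum k.1 ^ 2 * |modalEnergyRate ν f c k| :=
  .of_nonneg_of_le (fun _ => by positivity) (waveNum_sq_mul_abs_modalEnergyRate_le hν f c)
    ((Summable.add hf (Summable.mul_left _ hc)).add (hc.transport (hc.mono one_le_two)))

lemma summable_waveNum_sq_mul_modalEnergyRate (hν : 0 ≤ ν) (hf : HasSobolev 0 f)
    (hc : HasSobolev 2 c) : Summable fun k => waveNum k.1 ^ 2 * modalEnergyRate ν f c k :=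
  .of_abs <| by
    simpa only [abs_mul, abs_pow, abs_of_nonneg (waveNum_nonneg _)] using
      summable_waveNum_sq_mul_abs_modalEnergyRate hν hf hc

lemma tsum_waveNum_sq_mul_abs_modalEnergyRate_le (hν : 0 ≤ ν) (hf : HasSobolev 0 f)
    (hc : HasSobolev 2 c) :
    ∑' k, waveNum k.1 ^ 2 * |modalEnergyRate ν f c k| ≤
      sobolevSq 0 f + (2 + 2 * ν + productConst 0 * sobolevSq 1 c) * sobolevSq 2 c := by
  have hc1 : HasSobolev 1 c := hc.mono one_le_two
  have hB : HasSobolev 0 (Bc c c) := hc.transport hc1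
  have hvisc := Summable.mul_left (2 + 2 * ν) hc
  calc _ ≤ ∑' k : Freq, _ := (summable_waveNum_sq_mul_abs_modalEnergyRate hν hf hc).tsum_le_tsum
        (waveNum_sq_mul_abs_modalEnergyRate_le hν f c) ((Summable.add hf hvisc).add hB)
    _ = sobolevSq 0 f + (2 + 2 * ν) * sobolevSq 2 c + sobolevSq 0 (Bc c c) := by
      rw [(Summable.add hf hvisc).tsum_add hB, Summable.tsum_add hf hvisc, tsum_mul_left]
      rfl
    _ ≤ _ := by linarith [hc.sobolevSq_Bc_le hc1]

end ModalEnergy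

/-! ### The truncated energy inequality -/

/-- The constant multiplying `‖u‖²_{Ḣ¹}` in the `Ḣ^{b+1}` energy inequality. It vanishes for
`b = 0`, where the transport term conserves the enstrophy. -/
def energyConst (ν : ℝ) (b : ℕ) : ℝ := 7200 * (b * (2 ^ b + 1)) ^ 2 / ν

lemma energyConst_nonneg {ν : ℝ} (hν : 0 ≤ ν) (b : ℕ) : 0 ≤ energyConst ν b := by
  unfold energyConst
  positivity

lemma energyConst_zero (ν : ℝ) : energyConst ν 0 = 0 := by
  simp only [energyConst, CharP.cast_eq_zero, zero_mul, ne_eq, OfNat.ofNat_ne_zero,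
    not_false_eq_true, zero_pow, mul_zero, zero_div]

section TruncatedEnergy

variable {ν N : ℝ} {b : ℕ} {f c : Coef}

lemma truncWeight_nonneg (hN : 0 ≤ N) (b : ℕ) (k : ℤ × ℤ) : 0 ≤ truncWeight N b k :=
  pow_nonneg (le_min (waveNum_nonneg k) hN) b

lemma truncWeight_sq_le (hN : 0 ≤ N) (b : ℕ) (k : ℤ × ℤ) :
    truncWeight N b k ^ 2 ≤ waveNum k ^ (2 * b) := by
  rw [mul_comm, pow_mul]
  exact pow_le_pow_left₀ (truncWeight_nonneg hN b k)
    (pow_le_pow_left₀ (le_min (waveNum_nonneg k) hN) (min_le_left _ _) b) 2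

lemma abs_truncWeight_sq_le (hN : 0 ≤ N) (b : ℕ) (k : ℤ × ℤ) :
    |truncWeight N b k ^ 2| ≤ (N ^ b) ^ 2 := by
  rw [abs_of_nonneg (sq_nonneg _)]
  exact pow_le_pow_left₀ (truncWeight_nonneg hN b k)
    ((isCommutatorWeight_truncWeight hN b).le k) 2

lemma summable_truncWeight_sq_mul {g : Freq → ℝ} (hN : 0 ≤ N) (b : ℕ) (hg : Summable g) :
    Summable fun k => truncWeight N b k.1 ^ 2 * g k :=
  summable_mul_of_abs_le (fun k : Freq => abs_truncWeight_sq_le hN b k.1) hg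

lemma two_mul_force_le (hν : 0 < ν) (hN : 0 ≤ N) (b : ℕ) (f c : Coef) (k : Freq) :
    2 * (truncWeight N b k.1 ^ 2 * (waveNum k.1 ^ 2 * (f k * (starRingEnd ℂ) (c k)).re)) ≤
      8 / ν * (waveNum k.1 ^ (2 * b) * ‖f k‖ ^ 2) +
        ν / 2 * (truncWeight N b k.1 ^ 2 * (waveNum k.1 ^ (2 * 2) * ‖c k‖ ^ 2)) := by
  have hre : waveNum k.1 ^ 2 * (f k * (starRingEnd ℂ) (c k)).re ≤
      4 / ν * ‖f k‖ ^ 2 + ν / 4 * (waveNum k.1 ^ (2 * 2) * ‖c k‖ ^ 2) :=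
    calc waveNum k.1 ^ 2 * (f k * (starRingEnd ℂ) (c k)).re
        ≤ waveNum k.1 ^ 2 * (‖f k‖ * ‖c k‖) :=
          mul_le_mul_of_nonneg_left ((le_abs_self _).trans (abs_re_mul_conj_le _ _)) (sq_nonneg _)
      _ = ‖f k‖ * (waveNum k.1 ^ 2 * ‖c k‖) := by ring
      _ ≤ (ν / 4)⁻¹ * ‖f k‖ ^ 2 + ν / 4 * (waveNum k.1 ^ 2 * ‖c k‖) ^ 2 :=
          mul_le_inv_mul_sq_add_mul_sq (by positivity) _ _
      _ = _ := by rw [inv_div]; ring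
  have hweight : 8 / ν * (truncWeight N b k.1 ^ 2 * ‖f k‖ ^ 2) ≤
      8 / ν * (waveNum k.1 ^ (2 * b) * ‖f k‖ ^ 2) := by
    gcongr
    exact truncWeight_sq_le hN b k.1
  have hmul := mul_le_mul_of_nonneg_left hre (sq_nonneg (truncWeight N b k.1))
  linear_combination 2 * hmul + hweight

lemma summable_waveNum_sq_mul_re_Bc (hc : HasSobolev 2 c) : Summable fun k : Freq =>
    waveNum k.1 ^ 2 * (Bc c c k * (starRingEnd ℂ) (c k)).re := by
  have hB : HasSobolev 0 (Bc c c) := hc.transport (hc.mono one_le_two)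
  refine .of_abs <| .of_nonneg_of_le (fun _ => abs_nonneg _) (fun k => ?_) (Summable.add hB hc)
  calc |waveNum k.1 ^ 2 * (Bc c c k * (starRingEnd ℂ) (c k)).re|
      ≤ waveNum k.1 ^ 2 * (‖Bc c c k‖ * ‖c k‖) := by
        rw [abs_mul, abs_of_nonneg (sq_nonneg _)]
        exact mul_le_mul_of_nonneg_left (abs_re_mul_conj_le _ _) (sq_nonneg _)
    _ ≤ waveNum k.1 ^ (2 * 0) * ‖Bc c c k‖ ^ 2 + waveNum k.1 ^ (2 * 2) * ‖c k‖ ^ 2 := by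
        have hyoung := two_mul_le_add_sq ‖Bc c c k‖ (waveNum k.1 ^ 2 * ‖c k‖)
        have hnonneg : 0 ≤ waveNum k.1 ^ 2 * (‖Bc c c k‖ * ‖c k‖) := by positivity
        rw [mul_zero, pow_zero, one_mul]
        linear_combination hyoung + hnonneg

lemma neg_two_mul_tsum_truncWeight_Bc_le (hν : 0 < ν) (hN : 0 ≤ N) (b : ℕ)
    (hc : HasSobolev 2 c) (hreal : IsReal c) :
    -2 * ∑' k : Freq, truncWeight N b k.1 ^ 2 *
        (waveNum k.1 ^ 2 * (Bc c c k * (starRingEnd ℂ) (c k)).re) ≤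
      energyConst ν b * sobolevSq 1 c *
        (∑' k : Freq, truncWeight N b k.1 ^ 2 * (waveNum k.1 ^ (2 * 1) * ‖c k‖ ^ 2)) +
      ν / 2 * ∑' k : Freq, truncWeight N b k.1 ^ 2 * (waveNum k.1 ^ (2 * 2) * ‖c k‖ ^ 2) := by
  have hflux := abs_tsum_truncWeight_Bc_le hN b hc hreal (show 0 < ν / 4 by positivity)
  simp only [mul_comm (waveNum _ ^ _) (truncWeight N b _ ^ 2), mul_assoc (truncWeight N b _ ^ 2)]
    at hflux
  have hconst : 900 * (b * (2 ^ b + 1) : ℝ) ^ 2 / (ν / 4) = energyConst ν b / 2 := by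
    rw [energyConst, div_div_eq_mul_div]
    ring
  rw [hconst] at hflux
  linear_combination 2 * neg_le_of_abs_le hflux

theorem tsum_truncWeight_mul_modalEnergyRate_le (hν : 0 < ν) (hN : 0 ≤ N) (hf : HasSobolev b f)
    (hc : HasSobolev 2 c) (hreal : IsReal c) :
    ∑' k : Freq, truncWeight N b k.1 ^ 2 * (waveNum k.1 ^ 2 * modalEnergyRate ν f c k) ≤
      8 / ν * sobolevSq b f + energyConst ν b * sobolevSq 1 c *
        (∑' k : Freq, truncWeight N b k.1 ^ 2 * (waveNum k.1 ^ (2 * 1) * ‖c k‖ ^ 2)) -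
      ν * ∑' k : Freq, truncWeight N b k.1 ^ 2 * (waveNum k.1 ^ (2 * 2) * ‖c k‖ ^ 2) := by
  have hrate := summable_truncWeight_sq_mul hN b <|
    summable_waveNum_sq_mul_modalEnergyRate hν.le (hf.mono b.zero_le) hc
  have hforce : Summable fun k => 8 / ν * (waveNum k.1 ^ (2 * b) * ‖f k‖ ^ 2) :=
    Summable.mul_left _ hf
  have hdiss := (summable_truncWeight_sq_mul hN b hc).mul_left (-(3 * ν / 2))
  have htransport := (summable_truncWeight_sq_mul hN b
    (summable_waveNum_sq_mul_re_Bc hc)).mul_left (-2)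
  have hmode : ∀ k : Freq, truncWeight N b k.1 ^ 2 * (waveNum k.1 ^ 2 * modalEnergyRate ν f c k) ≤
      8 / ν * (waveNum k.1 ^ (2 * b) * ‖f k‖ ^ 2) +
      -(3 * ν / 2) * (truncWeight N b k.1 ^ 2 * (waveNum k.1 ^ (2 * 2) * ‖c k‖ ^ 2)) +
      -2 * (truncWeight N b k.1 ^ 2 *
        (waveNum k.1 ^ 2 * (Bc c c k * (starRingEnd ℂ) (c k)).re)) := fun k => by
    rw [modalEnergyRate_eq]
    linear_combination two_mul_force_le hν hN b f c k
  have hsum := hrate.tsum_le_tsum hmode ((hforce.add hdiss).add htransport)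
  rw [(hforce.add hdiss).tsum_add htransport, hforce.tsum_add hdiss, tsum_mul_left, tsum_mul_left,
    tsum_mul_left] at hsum
  rw [sobolevSq]
  linear_combination hsum + neg_two_mul_tsum_truncWeight_Bc_le hν hN b hc hreal

end TruncatedEnergy

/-! ### Energy estimates in integrated form -/

lemma tsum_truncWeight_sq_mul_le {N : ℝ} {b m : ℕ} {c : Coef} (hN : 0 ≤ N)
    (hm : HasSobolev m c) (hc : HasSobolev (b + m) c) :
    ∑' k : Freq, truncWeight N b k.1 ^ 2 * (waveNum k.1 ^ (2 * m) * ‖c k‖ ^ 2) ≤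
      sobolevSq (b + m) c := by
  refine (summable_truncWeight_sq_mul hN b hm).tsum_le_tsum (fun k => ?_) hc
  rw [mul_add, pow_add, mul_assoc]
  exact mul_le_mul_of_nonneg_right (truncWeight_sq_le hN b k.1) (waveNum_pow_mul_sq_nonneg m c k)

lemma sum_waveNum_pow_mul_sq_le_tsum_truncWeight {m : ℕ} {c : Coef} (b : ℕ)
    (hc : HasSobolev m c) (F : Finset Freq) :
    ∑ k ∈ F, waveNum k.1 ^ (2 * (b + m)) * ‖c k‖ ^ 2 ≤
      ∑' k : Freq, truncWeight (∑ j ∈ F, waveNum j.1) b k.1 ^ 2 *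
        (waveNum k.1 ^ (2 * m) * ‖c k‖ ^ 2) := by
  have hN : 0 ≤ ∑ j ∈ F, waveNum j.1 := Finset.sum_nonneg fun j _ => waveNum_nonneg j.1
  refine le_trans (Finset.sum_le_sum fun k hk => le_of_eq ?_)
    ((summable_truncWeight_sq_mul hN b hc).sum_le_tsum F fun k _ =>
      mul_nonneg (sq_nonneg _) (waveNum_pow_mul_sq_nonneg m c k))
  rw [truncWeight, min_eq_left
    (Finset.single_le_sum (f := fun j : Freq => waveNum j.1) (fun j _ => waveNum_nonneg j.1) hk)]
  ring

namespace IsNSSol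

variable {T ν t : ℝ} {f θ : Coef} {u : ℝ → Coef}

lemma restrict (h : IsNSSol ν f T θ u) (ht : t ≤ T) : IsNSSol ν f t θ u where
  init := h.init
  real s hs := h.real s ⟨hs.1, hs.2.trans ht⟩
  deriv k s hs := h.deriv k s ⟨hs.1, hs.2.trans ht⟩
  contH1 s hs ε hε := by
    obtain ⟨δ, hδ, hclose⟩ := h.contH1 s ⟨hs.1, hs.2.trans ht⟩ ε hε
    exact ⟨δ, hδ, fun r hr => hclose r ⟨hr.1, hr.2.trans ht⟩⟩
  memL2H2 := ⟨fun s hs => h.memL2H2.1 s ⟨hs.1, hs.2.trans ht⟩,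
    h.memL2H2.2.mono_set (Ioc_subset_Ioc_right ht)⟩

lemma integrableOn_tsum_mul_sq_norm {w : Freq → ℝ} {C : ℝ} (h : IsNSSol ν f T θ u)
    (hθ : HasSobolev 1 θ) (hw : ∀ k, 0 ≤ w k) (hwC : ∀ k, w k ≤ C * waveNum k.1 ^ (2 * 2)) :
    IntegrableOn (fun t => ∑' k, w k * ‖u t k‖ ^ 2) (Ioc 0 T) := by
  have hterm (t : ℝ) (k : Freq) :
      w k * ‖u t k‖ ^ 2 ≤ C * (waveNum k.1 ^ (2 * 2) * ‖u t k‖ ^ 2) := by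
    rw [← mul_assoc]
    exact mul_le_mul_of_nonneg_right (hwC k) (sq_nonneg _)
  have hnonneg (t : ℝ) (k : Freq) : 0 ≤ w k * ‖u t k‖ ^ 2 := mul_nonneg (hw k) (sq_nonneg _)
  have hsum : ∀ t ∈ Ioc 0 T, Summable fun k => w k * ‖u t k‖ ^ 2 := fun t ht =>
    .of_nonneg_of_le (hnonneg t) (hterm t) (Summable.mul_left C (h.hasSobolev_two ht))
  refine Integrable.mono' (h.integrableOn_sobolevSq_two.const_mul C)
    (aestronglyMeasurable_tsum
      (fun k => ((h.aestronglyMeasurable_apply hθ k).norm.pow 2).const_mul _)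
      (ae_restrict_of_forall_mem measurableSet_Ioc hsum)) ?_
  refine ae_restrict_of_forall_mem measurableSet_Ioc fun t ht => ?_
  rw [Real.norm_of_nonneg (tsum_nonneg (hnonneg t)), sobolevSq, ← tsum_mul_left]
  exact (hsum t ht).tsum_le_tsum (hterm t) (Summable.mul_left C (h.hasSobolev_two ht))

lemma integrableOn_sobolevSq_one (h : IsNSSol ν f T θ u) (hθ : HasSobolev 1 θ) :
    IntegrableOn (fun t => sobolevSq 1 (u t)) (Ioc 0 T) :=
  h.integrableOn_tsum_mul_sq_norm (C := 1) hθ (fun k => pow_nonneg (waveNum_nonneg k.1) _)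
    fun k => by
      rw [one_mul]
      exact pow_le_pow_right₀ (one_le_waveNum k.2) (by norm_num)

lemma hasDerivAt_sq_norm_apply (h : IsNSSol ν f T θ u) (k : Freq) (ht : t ∈ Ioc 0 T) :
    HasDerivAt (fun s => ‖u s k‖ ^ 2) (modalEnergyRate ν f (u t) k) t := by
  simpa only [Complex.inner, mul_comm ((starRingEnd ℂ) _), modalEnergyRate] using
    (h.deriv k t ht).norm_sq

lemma aestronglyMeasurable_modalEnergyRate (h : IsNSSol ν f T θ u) (hθ : HasSobolev 1 θ)
    (k : Freq) :
    AEStronglyMeasurable (fun t => modalEnergyRate ν f (u t) k) (volume.restrict (Ioc 0 T)) := by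
  have hu := h.aestronglyMeasurable_apply hθ k
  have hrhs : AEStronglyMeasurable
      (fun t => f k - ((ν * lam k : ℝ) : ℂ) * u t k - Bc (u t) (u t) k)
      (volume.restrict (Ioc 0 T)) :=
    (aestronglyMeasurable_const.sub (hu.const_mul _)).sub (h.aestronglyMeasurable_Bc_apply hθ k)
  exact (Complex.continuous_re.comp_aestronglyMeasurable
    (hrhs.mul (Complex.continuous_conj.comp_aestronglyMeasurable hu))).const_mul 2

lemma integrableOn_tsum_norm_modalEnergyRate (h : IsNSSol ν f T θ u) (hν : 0 ≤ ν)
    (hf : HasSobolev 0 f) (hθ : HasSobolev 1 θ) :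
    IntegrableOn (fun t => ∑' k : Freq, ‖waveNum k.1 ^ 2 * modalEnergyRate ν f (u t) k‖)
      (Ioc 0 T) := by
  obtain ⟨M, hM⟩ := h.bddAbove_sobolevSq_one hθ
  refine integrable_tsum_norm_of_le
    (G := fun t => sobolevSq 0 f + (2 + 2 * ν + productConst 0 * M) * sobolevSq 2 (u t))
    (fun k => (h.aestronglyMeasurable_modalEnergyRate hθ k).const_mul _)
    (ae_restrict_of_forall_mem measurableSet_Ioc fun t ht =>
      (summable_waveNum_sq_mul_modalEnergyRate hν hf (h.hasSobolev_two ht)).norm)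
    (ae_restrict_of_forall_mem measurableSet_Ioc fun t ht => ?_)
    ((integrable_const _).add (h.integrableOn_sobolevSq_two.const_mul _))
  have hbound := tsum_waveNum_sq_mul_abs_modalEnergyRate_le hν hf (h.hasSobolev_two ht)
  have hsup : sobolevSq 1 (u t) ≤ M := hM (mem_image_of_mem _ (Ioc_subset_Icc_self ht))
  simp only [norm_mul, norm_pow, Real.norm_eq_abs, abs_of_nonneg (waveNum_nonneg _)]
  refine hbound.trans ?_
  gcongr
  · exact sobolevSq_nonneg 2 (u t)
  · exact productConst_nonneg 0

lemma setIntegral_modalEnergyRate (h : IsNSSol ν f T θ u) (hT : 0 ≤ T) (hν : 0 ≤ ν)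
    (hf : HasSobolev 0 f) (hθ : HasSobolev 1 θ) (k : Freq) :
    ∫ t in Ioc 0 T, modalEnergyRate ν f (u t) k = ‖u T k‖ ^ 2 - ‖θ k‖ ^ 2 := by
  have hint : IntegrableOn (fun t => modalEnergyRate ν f (u t) k) (Ioc 0 T) := by
    have hweighted := integrable_of_integrable_tsum_norm
      (fun k => (h.aestronglyMeasurable_modalEnergyRate hθ k).const_mul (waveNum k.1 ^ 2))
      (ae_restrict_of_forall_mem measurableSet_Ioc fun t ht =>
        (summable_waveNum_sq_mul_modalEnergyRate hν hf (h.hasSobolev_two ht)).norm)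
      (h.integrableOn_tsum_norm_modalEnergyRate hν hf hθ) k
    exact (integrable_const_mul_iff (pow_pos (waveNum_freq_pos k) 2).ne'.isUnit _).mp hweighted
  rw [← intervalIntegral.integral_of_le hT, ← h.init]
  refine intervalIntegral.integral_eq_sub_of_hasDerivAt_of_le hT
    ((h.continuousOn_apply hθ k).norm.pow 2)
    (fun t ht => h.hasDerivAt_sq_norm_apply k (Ioo_subset_Ioc_self ht)) ?_
  rwa [intervalIntegrable_iff_integrableOn_Ioc_of_le hT]

section WeightedBalance

variable {W : Freq → ℝ} {C : ℝ}

lemma integrableOn_tsum_norm_mul_modalEnergyRate (h : IsNSSol ν f T θ u) (hν : 0 ≤ ν)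
    (hf : HasSobolev 0 f) (hθ : HasSobolev 1 θ) (hW : ∀ k, |W k| ≤ C) :
    IntegrableOn (fun t => ∑' k : Freq,
      ‖W k * (waveNum k.1 ^ 2 * modalEnergyRate ν f (u t) k)‖) (Ioc 0 T) := by
  have hsum (t : ℝ) (ht : t ∈ Ioc 0 T) :=
    summable_waveNum_sq_mul_modalEnergyRate hν hf (h.hasSobolev_two ht)
  refine integrable_tsum_norm_of_le
    (fun k => ((h.aestronglyMeasurable_modalEnergyRate hθ k).const_mul _).const_mul _)
    (ae_restrict_of_forall_mem measurableSet_Ioc fun t ht =>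
      (summable_mul_of_abs_le hW (hsum t ht)).norm)
    (ae_restrict_of_forall_mem measurableSet_Ioc fun t ht => ?_)
    ((h.integrableOn_tsum_norm_modalEnergyRate hν hf hθ).const_mul C)
  rw [← tsum_mul_left]
  refine (summable_mul_of_abs_le hW (hsum t ht)).norm.tsum_le_tsum (fun k => ?_)
    ((hsum t ht).norm.mul_left C)
  rw [norm_mul]
  exact mul_le_mul_of_nonneg_right (hW k) (norm_nonneg _)

lemma hasSum_integral_mul_modalEnergyRate (h : IsNSSol ν f T θ u) (hT : 0 ≤ T) (hν : 0 ≤ ν)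
    (hf : HasSobolev 0 f) (hθ : HasSobolev 1 θ) (hW : ∀ k, |W k| ≤ C) :
    HasSum (fun k : Freq => W k * (waveNum k.1 ^ 2 * (‖u T k‖ ^ 2 - ‖θ k‖ ^ 2)))
      (∫ t in Ioc 0 T, ∑' k : Freq, W k * (waveNum k.1 ^ 2 * modalEnergyRate ν f (u t) k)) := by
  have hsum := hasSum_integral_of_integrable_tsum_norm
    (fun k => ((h.aestronglyMeasurable_modalEnergyRate hθ k).const_mul _).const_mul _)
    (ae_restrict_of_forall_mem measurableSet_Ioc fun t ht => (summable_mul_of_abs_le hW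
      (summable_waveNum_sq_mul_modalEnergyRate hν hf (h.hasSobolev_two ht))).norm)
    (h.integrableOn_tsum_norm_mul_modalEnergyRate hν hf hθ hW)
  simpa only [integral_const_mul, h.setIntegral_modalEnergyRate hT hν hf hθ] using hsum

lemma tsum_mul_sq_norm_eq_add_integral (h : IsNSSol ν f T θ u) (hT : 0 ≤ T) (hν : 0 ≤ ν)
    (hf : HasSobolev 0 f) (hθ : HasSobolev 1 θ) (hW : ∀ k, |W k| ≤ C) :
    ∑' k : Freq, W k * (waveNum k.1 ^ (2 * 1) * ‖u T k‖ ^ 2) =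
      ∑' k : Freq, W k * (waveNum k.1 ^ (2 * 1) * ‖θ k‖ ^ 2) +
      ∫ t in Ioc 0 T, ∑' k : Freq, W k * (waveNum k.1 ^ 2 * modalEnergyRate ν f (u t) k) := by
  have hsumT := summable_mul_of_abs_le hW (h.hasSobolev_one hθ (right_mem_Icc.mpr hT))
  have hsum0 := summable_mul_of_abs_le hW hθ
  rw [← (h.hasSum_integral_mul_modalEnergyRate hT hν hf hθ hW).tsum_eq, ← sub_eq_iff_eq_add',
    ← hsumT.tsum_sub hsum0]
  exact tsum_congr fun k => by ring

lemma integrableOn_tsum_mul_modalEnergyRate (h : IsNSSol ν f T θ u) (hν : 0 ≤ ν)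
    (hf : HasSobolev 0 f) (hθ : HasSobolev 1 θ) (hW : ∀ k, |W k| ≤ C) :
    IntegrableOn (fun t => ∑' k : Freq, W k * (waveNum k.1 ^ 2 * modalEnergyRate ν f (u t) k))
      (Ioc 0 T) := by
  have hae := ae_restrict_of_forall_mem (μ := volume) measurableSet_Ioc fun t ht =>
    (summable_mul_of_abs_le hW
      (summable_waveNum_sq_mul_modalEnergyRate hν hf (h.hasSobolev_two ht))).norm
  exact (h.integrableOn_tsum_norm_mul_modalEnergyRate hν hf hθ hW).mono'
    (aestronglyMeasurable_tsum
      (fun k => ((h.aestronglyMeasurable_modalEnergyRate hθ k).const_mul _).const_mul _)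
      (hae.mono fun _ ht => ht.of_norm))
    (hae.mono fun _ ht => norm_tsum_le_tsum_norm ht)

end WeightedBalance

lemma integrableOn_tsum_truncWeight_mul {N : ℝ} (h : IsNSSol ν f T θ u) (hN : 0 ≤ N) (b : ℕ)
    (hθ : HasSobolev 1 θ) :
    IntegrableOn (fun t => ∑' k : Freq,
      truncWeight N b k.1 ^ 2 * (waveNum k.1 ^ (2 * 2) * ‖u t k‖ ^ 2)) (Ioc 0 T) := by
  simp only [← mul_assoc]
  exact h.integrableOn_tsum_mul_sq_norm hθ
    (fun k => mul_nonneg (sq_nonneg _) (pow_nonneg (waveNum_nonneg k.1) _))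
    fun k => mul_le_mul_of_nonneg_right ((le_abs_self _).trans (abs_truncWeight_sq_le hN b k.1))
      (pow_nonneg (waveNum_nonneg k.1) _)

theorem truncated_energy_inequality {N M : ℝ} {b : ℕ} (h : IsNSSol ν f T θ u) (hT : 0 ≤ T)
    (hν : 0 < ν) (hN : 0 ≤ N) (hf : HasSobolev b f) (hθ : HasSobolev (b + 1) θ)
    (hmem : ∀ᵐ t ∂volume.restrict (Ioc 0 T), HasSobolev (b + 1) (u t))
    (hint : IntegrableOn (fun t => sobolevSq (b + 1) (u t)) (Ioc 0 T))
    (hM : ∀ t ∈ Ioc 0 T, energyConst ν b * sobolevSq 1 (u t) ≤ M) :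
    ∑' k : Freq, truncWeight N b k.1 ^ 2 * (waveNum k.1 ^ (2 * 1) * ‖u T k‖ ^ 2) +
      ν * ∫ t in Ioc 0 T, ∑' k : Freq,
        truncWeight N b k.1 ^ 2 * (waveNum k.1 ^ (2 * 2) * ‖u t k‖ ^ 2) ≤
      sobolevSq (b + 1) θ + T * (8 / ν * sobolevSq b f) +
        M * ∫ t in Ioc 0 T, sobolevSq (b + 1) (u t) := by
  have hθ1 : HasSobolev 1 θ := hθ.mono (by omega)
  have hf0 : HasSobolev 0 f := hf.mono b.zero_le
  have hW : ∀ k : Freq, |truncWeight N b k.1 ^ 2| ≤ (N ^ b) ^ 2 :=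
    fun k => abs_truncWeight_sq_le hN b k.1
  have hdiss := (h.integrableOn_tsum_truncWeight_mul hN b hθ1).const_mul ν
  have hsource : IntegrableOn (fun _ => 8 / ν * sobolevSq b f) (Ioc 0 T) := integrable_const _
  have hgrowth := hint.const_mul M
  have hpointwise : ∀ᵐ t ∂volume.restrict (Ioc 0 T), ∑' k : Freq,
      truncWeight N b k.1 ^ 2 * (waveNum k.1 ^ 2 * modalEnergyRate ν f (u t) k) ≤
      8 / ν * sobolevSq b f + M * sobolevSq (b + 1) (u t) -
        ν * ∑' k : Freq, truncWeight N b k.1 ^ 2 * (waveNum k.1 ^ (2 * 2) * ‖u t k‖ ^ 2) := by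
    filter_upwards [hmem, ae_restrict_mem measurableSet_Ioc] with t hmemt ht
    refine (tsum_truncWeight_mul_modalEnergyRate_le hν hN hf (h.hasSobolev_two ht)
      (h.real t (Ioc_subset_Icc_self ht))).trans ?_
    gcongr
    · exact tsum_nonneg fun k => mul_nonneg (sq_nonneg _) (waveNum_pow_mul_sq_nonneg 1 (u t) k)
    · exact (mul_nonneg (energyConst_nonneg hν.le b) (sobolevSq_nonneg 1 (u t))).trans (hM t ht)
    · exact hM t ht
    · exact tsum_truncWeight_sq_mul_le hN (h.hasSobolev_one hθ1 (Ioc_subset_Icc_self ht)) hmemt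
  have hrate := integral_mono_ae (h.integrableOn_tsum_mul_modalEnergyRate hν.le hf0 hθ1 hW)
    ((hsource.add hgrowth).sub hdiss) hpointwise
  rw [integral_sub' (hsource.add hgrowth) hdiss, integral_add' hsource hgrowth, setIntegral_const,
    Real.volume_real_Ioc_of_le hT, sub_zero, smul_eq_mul, integral_const_mul,
    integral_const_mul] at hrate
  linarith [h.tsum_mul_sq_norm_eq_add_integral hT hν.le hf0 hθ1 hW,
    tsum_truncWeight_sq_mul_le hN hθ1 hθ]

end IsNSSol

/-! ### Sobolev bounds -/

/-- The trajectory `u` lies in `L^∞([0,T], Ḣⁿ) ∩ L²([0,T], Ḣⁿ⁺¹)` and `K` bounds both squared norms.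
The first bound holds at every time, the second one only requires almost every `u t` to be in
`Ḣⁿ⁺¹`. -/
structure HasSobolevBound (T : ℝ) (n : ℕ) (K : ℝ) (u : ℝ → Coef) : Prop where
  hasSobolev : ∀ t ∈ Icc 0 T, HasSobolev n (u t)
  ae_hasSobolev : ∀ᵐ t ∂volume.restrict (Ioc 0 T), HasSobolev (n + 1) (u t)
  integrableOn : IntegrableOn (fun t => sobolevSq (n + 1) (u t)) (Ioc 0 T)
  sobolevSq_le : ∀ t ∈ Icc 0 T, sobolevSq n (u t) ≤ K
  integral_le : ∫ t in Ioc 0 T, sobolevSq (n + 1) (u t) ≤ K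

lemma HasSobolevBound.mono {T K L : ℝ} {n : ℕ} {u : ℝ → Coef} (h : HasSobolevBound T n K u)
    (hKL : K ≤ L) : HasSobolevBound T n L u :=
  { h with
    sobolevSq_le := fun t ht => (h.sobolevSq_le t ht).trans hKL
    integral_le := h.integral_le.trans hKL }

lemma one_add_mul_one_add_pow_le {x : ℝ} (hx : 0 ≤ x) (n : ℕ) :
    (1 + x) * (1 + x ^ n) ≤ 4 * (1 + x ^ (n + 1)) := by
  rw [pow_succ]
  rcases le_total x 1 with h | h
  · nlinarith [pow_le_one₀ (n := n) hx h, pow_nonneg hx n]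
  · nlinarith [one_le_pow₀ (n := n) h]

lemma le_one_add_pow_succ {x : ℝ} (hx : 0 ≤ x) (n : ℕ) : x ≤ 1 + x ^ (n + 1) := by
  rcases le_total x 1 with h | h
  · linarith [pow_nonneg hx (n + 1)]
  · exact (le_self_pow₀ h n.succ_ne_zero).trans (le_add_of_nonneg_left zero_le_one)

namespace IsNSSol

variable {T ν M t : ℝ} {b : ℕ} {f θ : Coef} {u : ℝ → Coef}

lemma truncated_energy_le {N : ℝ} (h : IsNSSol ν f T θ u) (ht : t ∈ Icc 0 T) (hν : 0 < ν)
    (hN : 0 ≤ N) (hf : HasSobolev b f) (hθ : HasSobolev (b + 1) θ) (hM₀ : 0 ≤ M)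
    (hmem : ∀ᵐ t ∂volume.restrict (Ioc 0 T), HasSobolev (b + 1) (u t))
    (hint : IntegrableOn (fun t => sobolevSq (b + 1) (u t)) (Ioc 0 T))
    (hM : ∀ t ∈ Ioc 0 T, energyConst ν b * sobolevSq 1 (u t) ≤ M) :
    ∑' k : Freq, truncWeight N b k.1 ^ 2 * (waveNum k.1 ^ (2 * 1) * ‖u t k‖ ^ 2) ≤
      sobolevSq (b + 1) θ + T * (8 / ν * sobolevSq b f) +
        M * ∫ t in Ioc 0 T, sobolevSq (b + 1) (u t) := by
  have hsub : Ioc 0 t ⊆ Ioc 0 T := Ioc_subset_Ioc_right ht.2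
  have henergy := (h.restrict ht.2).truncated_energy_inequality ht.1 hν hN hf hθ
    (ae_mono (Measure.restrict_mono hsub le_rfl) hmem) (hint.mono_set hsub)
    fun s hs => hM s (hsub hs)
  have hdiss : 0 ≤ ∫ s in Ioc 0 t, ∑' k : Freq,
      truncWeight N b k.1 ^ 2 * (waveNum k.1 ^ (2 * 2) * ‖u s k‖ ^ 2) :=
    integral_nonneg fun s => tsum_nonneg fun k =>
      mul_nonneg (sq_nonneg _) (waveNum_pow_mul_sq_nonneg 2 (u s) k)
  refine (le_add_of_nonneg_right (mul_nonneg hν.le hdiss)).trans (henergy.trans ?_)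
  gcongr
  · exact mul_nonneg (by positivity) (sobolevSq_nonneg b f)
  · exact ht.2
  · exact .of_forall fun s => sobolevSq_nonneg (b + 1) (u s)

lemma sum_integral_waveNum_pow_mul_sq_le (h : IsNSSol ν f T θ u) (hT : 0 ≤ T) (hν : 0 < ν)
    (hf : HasSobolev b f) (hθ : HasSobolev (b + 1) θ)
    (hmem : ∀ᵐ t ∂volume.restrict (Ioc 0 T), HasSobolev (b + 1) (u t))
    (hint : IntegrableOn (fun t => sobolevSq (b + 1) (u t)) (Ioc 0 T))
    (hM : ∀ t ∈ Ioc 0 T, energyConst ν b * sobolevSq 1 (u t) ≤ M) (F : Finset Freq) :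
    ∑ k ∈ F, ∫ t in Ioc 0 T, waveNum k.1 ^ (2 * (b + 2)) * ‖u t k‖ ^ 2 ≤
      ν⁻¹ * (sobolevSq (b + 1) θ + T * (8 / ν * sobolevSq b f) +
        M * ∫ t in Ioc 0 T, sobolevSq (b + 1) (u t)) := by
  have hθ1 : HasSobolev 1 θ := hθ.mono (by omega)
  have hN : 0 ≤ ∑ j ∈ F, waveNum j.1 := Finset.sum_nonneg fun j _ => waveNum_nonneg j.1
  have hmode (k : Freq) : IntegrableOn (fun t => waveNum k.1 ^ (2 * (b + 2)) * ‖u t k‖ ^ 2)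
      (Ioc 0 T) := (h.integrableOn_sq_norm_apply hθ1 k).const_mul _
  rw [le_inv_mul_iff₀ hν, ← integral_finsetSum F fun k _ => hmode k]
  refine le_trans (mul_le_mul_of_nonneg_left (setIntegral_mono_on
    (integrable_finsetSum F fun k _ => hmode k) (h.integrableOn_tsum_truncWeight_mul hN b hθ1)
    measurableSet_Ioc fun t ht => sum_waveNum_pow_mul_sq_le_tsum_truncWeight b
      (h.hasSobolev_two ht) F) hν.le) ?_
  exact (le_add_of_nonneg_left (tsum_nonneg fun k =>
    mul_nonneg (sq_nonneg _) (waveNum_pow_mul_sq_nonneg 1 (u T) k))).trans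
    (h.truncated_energy_inequality hT hν hN hf hθ hmem hint hM)

theorem hasSobolevBound_of_energyConst_mul_le (h : IsNSSol ν f T θ u) (hT : 0 ≤ T) (hν : 0 < ν)
    (hf : HasSobolev b f) (hθ : HasSobolev (b + 1) θ) (hM₀ : 0 ≤ M)
    (hmem : ∀ᵐ t ∂volume.restrict (Ioc 0 T), HasSobolev (b + 1) (u t))
    (hint : IntegrableOn (fun t => sobolevSq (b + 1) (u t)) (Ioc 0 T))
    (hM : ∀ t ∈ Ioc 0 T, energyConst ν b * sobolevSq 1 (u t) ≤ M) :
    HasSobolevBound T (b + 1) ((1 + ν⁻¹) * (sobolevSq (b + 1) θ + T * (8 / ν * sobolevSq b f) +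
      M * ∫ t in Ioc 0 T, sobolevSq (b + 1) (u t))) u := by
  set K := sobolevSq (b + 1) θ + T * (8 / ν * sobolevSq b f) +
    M * ∫ t in Ioc 0 T, sobolevSq (b + 1) (u t)
  have hθ1 : HasSobolev 1 θ := hθ.mono (by omega)
  have hsup (t : ℝ) (ht : t ∈ Icc 0 T) (F : Finset Freq) :
      ∑ k ∈ F, waveNum k.1 ^ (2 * (b + 1)) * ‖u t k‖ ^ 2 ≤ K :=
    (sum_waveNum_pow_mul_sq_le_tsum_truncWeight b (h.hasSobolev_one hθ1 ht) F).trans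
      (h.truncated_energy_le ht hν (Finset.sum_nonneg fun j _ => waveNum_nonneg j.1) hf hθ hM₀
        hmem hint hM)
  have hK : 0 ≤ K := hsup 0 (left_mem_Icc.mpr hT) ∅
  have hintegral := integrable_and_integral_tsum_le
    (fun k t => waveNum_pow_mul_sq_nonneg (b + 2) (u t) k)
    (fun k => (h.integrableOn_sq_norm_apply hθ1 k).const_mul _)
    (h.sum_integral_waveNum_pow_mul_sq_le hT hν hf hθ hmem hint hM)
  have hνK : 0 ≤ ν⁻¹ * K := mul_nonneg (inv_nonneg.mpr hν.le) hK
  refine ⟨fun t ht => summable_of_sum_le (waveNum_pow_mul_sq_nonneg (b + 1) (u t)) (hsup t ht),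
    hintegral.1, hintegral.2.1, fun t ht => ?_, hintegral.2.2.trans (by linarith)⟩
  exact (Real.tsum_le_of_sum_le (waveNum_pow_mul_sq_nonneg (b + 1) (u t)) (hsup t ht)).trans
    (by linarith)

lemma hasSobolevBound_succ {R C₀ C₁ : ℝ} (h : IsNSSol ν f T θ u) (hT : 0 ≤ T) (hν : 0 < ν)
    (hf : HasSobolev (b + 1) f) (hfR : sobolevSq (b + 1) f ≤ R) (hθ : HasSobolev (b + 2) θ)
    (hC₀ : 0 ≤ C₀) (hC₁ : 0 ≤ C₁)
    (hfirst : HasSobolevBound T 1 (C₀ * (1 + sobolevSq (b + 2) θ)) u)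
    (hprev : HasSobolevBound T (b + 1) (C₁ * (1 + sobolevSq (b + 2) θ ^ (b + 1))) u) :
    HasSobolevBound T (b + 2)
      ((1 + ν⁻¹) * (1 + T * (8 / ν * R) + energyConst ν (b + 1) * C₀ * C₁ * 4) *
        (1 + sobolevSq (b + 2) θ ^ (b + 2))) u := by
  have hX := sobolevSq_nonneg (b + 2) θ
  have hE := energyConst_nonneg hν.le (b + 1)
  refine (h.hasSobolevBound_of_energyConst_mul_le hT hν hf hθ
    (M := energyConst ν (b + 1) * (C₀ * (1 + sobolevSq (b + 2) θ))) (by positivity)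
    hprev.ae_hasSobolev hprev.integrableOn fun t ht => mul_le_mul_of_nonneg_left
      (hfirst.sobolevSq_le t (Ioc_subset_Icc_self ht)) hE).mono ?_
  rw [mul_assoc (1 + ν⁻¹)]
  refine mul_le_mul_of_nonneg_left ?_ (by positivity)
  have hgrowth := calc
    energyConst ν (b + 1) * (C₀ * (1 + sobolevSq (b + 2) θ)) *
        ∫ t in Ioc 0 T, sobolevSq (b + 1 + 1) (u t)
      ≤ energyConst ν (b + 1) * (C₀ * (1 + sobolevSq (b + 2) θ)) *
          (C₁ * (1 + sobolevSq (b + 2) θ ^ (b + 1))) := by gcongr; exact hprev.integral_le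
    _ = energyConst ν (b + 1) * C₀ * C₁ *
          ((1 + sobolevSq (b + 2) θ) * (1 + sobolevSq (b + 2) θ ^ (b + 1))) := by ring
    _ ≤ energyConst ν (b + 1) * C₀ * C₁ * (4 * (1 + sobolevSq (b + 2) θ ^ (b + 2))) := by
        gcongr ?_ * ?_
        exact one_add_mul_one_add_pow_le hX (b + 1)
  have hforce : T * (8 / ν * sobolevSq (b + 1) f) ≤
      T * (8 / ν * R) * (1 + sobolevSq (b + 2) θ ^ (b + 2)) := by
    have hR : 0 ≤ R := (sobolevSq_nonneg (b + 1) f).trans hfR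
    refine (show _ ≤ T * (8 / ν * R) by gcongr).trans (le_mul_of_one_le_right (by positivity) ?_)
    exact le_add_of_nonneg_right (pow_nonneg hX _)
  have hinit := le_one_add_pow_succ hX (b + 1)
  linarith

end IsNSSol

section UniformBounds

variable {T ν R : ℝ}

lemma exists_hasSobolevBound_one (hT : 0 ≤ T) (hν : 0 < ν) (hR : 0 ≤ R) :
    ∃ C ≥ 0, ∀ {f θ : Coef} {u : ℝ → Coef}, HasSobolev 0 f → sobolevSq 0 f ≤ R →
      HasSobolev 1 θ → IsNSSol ν f T θ u →
      HasSobolevBound T 1 (C * (1 + sobolevSq 1 θ)) u := by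
  refine ⟨(1 + ν⁻¹) * (1 + T * (8 / ν * R)), by positivity,
    fun {f θ u} hf hfR hθ h => ?_⟩
  refine (h.hasSobolevBound_of_energyConst_mul_le hT hν hf hθ le_rfl
    (ae_restrict_of_forall_mem measurableSet_Ioc fun t ht =>
      h.hasSobolev_one hθ (Ioc_subset_Icc_self ht))
    (h.integrableOn_sobolevSq_one hθ)
    fun t _ => by rw [energyConst_zero, zero_mul]).mono ?_
  rw [zero_mul, add_zero, zero_add, mul_assoc]
  refine mul_le_mul_of_nonneg_left ?_ (by positivity)
  have hforce : T * (8 / ν * sobolevSq 0 f) ≤ T * (8 / ν * R) := by gcongr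
  have hforce_mul : 0 ≤ T * (8 / ν * R) * sobolevSq 1 θ :=
    mul_nonneg (by positivity) (sobolevSq_nonneg 1 θ)
  linarith

theorem exists_hasSobolevBound (hT : 0 ≤ T) (hν : 0 < ν) (hR : 0 ≤ R) (b : ℕ) :
    ∃ C ≥ 0, ∀ {f θ : Coef} {u : ℝ → Coef}, HasSobolev b f → sobolevSq b f ≤ R →
      HasSobolev (b + 1) θ → IsNSSol ν f T θ u →
      HasSobolevBound T (b + 1) (C * (1 + sobolevSq (b + 1) θ ^ (b + 1))) u := by
  obtain ⟨C₀, hC₀, hbound₀⟩ := exists_hasSobolevBound_one hT hν hR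
  induction b with
  | zero => simpa only [zero_add, pow_one] using ⟨C₀, hC₀, hbound₀⟩
  | succ b ih =>
    obtain ⟨C₁, hC₁, hbound₁⟩ := ih
    have hE := energyConst_nonneg hν.le (b + 1)
    refine ⟨(1 + ν⁻¹) * (1 + T * (8 / ν * R) + energyConst ν (b + 1) * C₀ * C₁ * 4),
      by positivity, fun {f θ u} hf hfR hθ h => ?_⟩
    have hfirst := hbound₀ (hf.mono (by omega)) ((hf.sobolevSq_le (by omega)).trans hfR)
      (hθ.mono (by omega)) h
    have hprev := hbound₁ (hf.mono (by omega)) ((hf.sobolevSq_le (by omega)).trans hfR)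
      (hθ.mono (by omega)) h
    refine h.hasSobolevBound_succ hT hν hf hfR hθ hC₀ hC₁ (hfirst.mono ?_) (hprev.mono ?_)
    · gcongr
      exact hθ.sobolevSq_le (by omega)
    · gcongr
      · exact sobolevSq_nonneg (b + 1) θ
      · exact hθ.sobolevSq_le (by omega)

end UniformBounds

/-! ### Regularity -/

/-- The solution `g = (νA)⁻¹ f` of the stationary Stokes problem. In terms of `w = u - g` the
Navier–Stokes equations read `dw/dt + νAw = -B[u,u]`, without the rough forcing `f`. -/
def stokesSol (ν : ℝ) (f : Coef) : Coef := fun k => f k / ((ν * lam k : ℝ) : ℂ)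

/-- The squared `L²([0,T])` norm of the `k`-th mode of the nonlinearity `B[u,u]`. -/
def transportModeSq (T : ℝ) (u : ℝ → Coef) (k : Freq) : ℝ :=
  ∫ t in Ioc 0 T, ‖Bc (u t) (u t) k‖ ^ 2

lemma transportModeSq_nonneg (T : ℝ) (u : ℝ → Coef) (k : Freq) : 0 ≤ transportModeSq T u k :=
  integral_nonneg fun _ => sq_nonneg _

/-- A majorant of `‖u t k‖ ^ 2` for `s ≤ t ≤ T`: the mode `u - g` of the solution relative to the
stationary Stokes solution `g` only grows through the nonlinearity. -/
def stokesMajorant (ν : ℝ) (f : Coef) (T : ℝ) (u : ℝ → Coef) (s : ℝ) (k : Freq) : ℝ :=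
  2 * (‖u s k - stokesSol ν f k‖ ^ 2 + 2 / (ν * lam k) * transportModeSq T u k +
    ‖stokesSol ν f k‖ ^ 2)

section Stokes

variable {ν : ℝ} {f : Coef}

lemma lam_pos (k : Freq) : 0 < lam k := by
  rw [lam_eq_waveNum_sq]
  exact pow_pos (waveNum_freq_pos k) 2

lemma mul_stokesSol (hν : ν ≠ 0) (f : Coef) (k : Freq) :
    ((ν * lam k : ℝ) : ℂ) * stokesSol ν f k = f k :=
  mul_div_cancel₀ _ (Complex.ofReal_ne_zero.mpr (mul_ne_zero hν (lam_pos k).ne'))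

lemma waveNum_pow_mul_sq_stokesSol (n : ℕ) (k : Freq) :
    waveNum k.1 ^ (2 * (n + 2)) * ‖stokesSol ν f k‖ ^ 2 =
      (ν ^ 2)⁻¹ * (waveNum k.1 ^ (2 * n) * ‖f k‖ ^ 2) := by
  have hω := (waveNum_freq_pos k).ne'
  rw [stokesSol, norm_div, Complex.norm_real, div_pow, Real.norm_eq_abs, sq_abs,
    lam_eq_waveNum_sq, mul_pow, show 2 * (n + 2) = 2 * n + 4 by ring, pow_add]
  field_simp

lemma HasSobolev.stokesSol {n : ℕ} (hf : HasSobolev n f) : HasSobolev (n + 2) (stokesSol ν f) := by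
  simpa only [HasSobolev, waveNum_pow_mul_sq_stokesSol] using Summable.mul_left (ν ^ 2)⁻¹ hf

lemma two_mul_re_neg_mul_sub_mul_conj_le {ρ : ℝ} (hρ : 0 < ρ) (w z : ℂ) :
    2 * ((-((ρ : ℂ) * w) - z) * (starRingEnd ℂ) w).re ≤ 2 / ρ * ‖z‖ ^ 2 := by
  have hdiss : ((-((ρ : ℂ) * w) - z) * (starRingEnd ℂ) w).re =
      -(ρ * ‖w‖ ^ 2) - (z * (starRingEnd ℂ) w).re := by
    rw [sub_mul, neg_mul, mul_assoc, Complex.mul_conj, Complex.normSq_eq_norm_sq,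
      ← Complex.ofReal_mul, Complex.sub_re, Complex.neg_re, Complex.ofReal_re]
  have hyoung := mul_le_inv_mul_sq_add_mul_sq (half_pos hρ) ‖z‖ (2 * ‖w‖)
  rw [inv_div] at hyoung
  rw [hdiss]
  linarith [neg_le_of_abs_le (abs_re_mul_conj_le z w)]

end Stokes

namespace IsNSSol

variable {T ν K s t : ℝ} {n : ℕ} {f θ : Coef} {u : ℝ → Coef}

lemma hasDerivAt_sq_norm_sub_stokesSol (h : IsNSSol ν f T θ u) (hν : ν ≠ 0) (ht : t ∈ Ioc 0 T)
    (k : Freq) :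
    HasDerivAt (fun τ => ‖u τ k - stokesSol ν f k‖ ^ 2)
      (2 * ((-(((ν * lam k : ℝ) : ℂ) * (u t k - stokesSol ν f k)) - Bc (u t) (u t) k) *
        (starRingEnd ℂ) (u t k - stokesSol ν f k)).re) t := by
  convert ((h.deriv k t ht).sub_const (stokesSol ν f k)).norm_sq using 2
  rw [Complex.inner, mul_sub, mul_stokesSol hν]
  ring_nf

lemma sq_norm_sub_stokesSol_le (h : IsNSSol ν f T θ u) (hν : 0 < ν) (hθ : HasSobolev 1 θ)
    {k : Freq} (hB : IntegrableOn (fun τ => ‖Bc (u τ) (u τ) k‖ ^ 2) (Ioc 0 T)) (hs : 0 ≤ s)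
    (hst : s ≤ t) (ht : t ≤ T) :
    ‖u t k - stokesSol ν f k‖ ^ 2 ≤
      ‖u s k - stokesSol ν f k‖ ^ 2 + 2 / (ν * lam k) * transportModeSq T u k := by
  have hρ : 0 < ν * lam k := mul_pos hν (lam_pos k)
  have hsub : Ioc s t ⊆ Ioc 0 T := Ioc_subset_Ioc hs ht
  have hgrowth := intervalIntegral.sub_le_integral_of_hasDeriv_right_of_le
    (g := fun τ => ‖u τ k - stokesSol ν f k‖ ^ 2)
    (φ := fun τ => 2 / (ν * lam k) * ‖Bc (u τ) (u τ) k‖ ^ 2) hst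
    ((((h.continuousOn_apply hθ k).mono (Icc_subset_Icc hs ht)).sub continuousOn_const).norm.pow 2)
    (fun τ hτ => (h.hasDerivAt_sq_norm_sub_stokesSol hν.ne'
      (hsub (Ioo_subset_Ioc_self hτ)) k).hasDerivWithinAt)
    (by rw [integrableOn_Icc_iff_integrableOn_Ioc]; exact (hB.mono_set hsub).const_mul _)
    fun τ _ => two_mul_re_neg_mul_sub_mul_conj_le hρ _ _
  rw [intervalIntegral.integral_of_le hst, integral_const_mul] at hgrowth
  refine sub_le_iff_le_add'.mp (hgrowth.trans (mul_le_mul_of_nonneg_left ?_ (by positivity)))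
  exact setIntegral_mono_set hB (.of_forall fun τ => sq_nonneg _) hsub.eventuallyLE

lemma ae_hasSobolev_Bc (h : IsNSSol ν f T θ u) (hu : HasSobolevBound T (n + 2) K u) :
    ∀ᵐ t ∂volume.restrict (Ioc 0 T), HasSobolev (n + 2) (Bc (u t) (u t)) := by
  filter_upwards [hu.ae_hasSobolev, ae_restrict_mem measurableSet_Ioc] with t hmem ht
  exact (h.hasSobolev_two ht).transport hmem

lemma integrableOn_sobolevSq_Bc (h : IsNSSol ν f T θ u) (hθ : HasSobolev 1 θ)
    (hu : HasSobolevBound T (n + 2) K u) :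
    IntegrableOn (fun t => sobolevSq (n + 2) (Bc (u t) (u t))) (Ioc 0 T) := by
  refine (hu.integrableOn.const_mul (productConst (n + 2) * K)).mono'
    (aestronglyMeasurable_tsum
      (fun k => ((h.aestronglyMeasurable_Bc_apply hθ k).norm.pow 2).const_mul _)
      (h.ae_hasSobolev_Bc hu)) ?_
  filter_upwards [hu.ae_hasSobolev, ae_restrict_mem measurableSet_Ioc] with t hmem ht
  have ht' := Ioc_subset_Icc_self ht
  rw [Real.norm_of_nonneg (sobolevSq_nonneg _ _)]
  refine ((h.hasSobolev_two ht).sobolevSq_Bc_le hmem).trans ?_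
  gcongr
  · exact sobolevSq_nonneg _ _
  · exact productConst_nonneg _
  · exact ((hu.hasSobolev t ht').sobolevSq_le (by omega)).trans (hu.sobolevSq_le t ht')

lemma integrableOn_sq_norm_Bc_apply (h : IsNSSol ν f T θ u) (hθ : HasSobolev 1 θ)
    (hu : HasSobolevBound T (n + 2) K u) (k : Freq) :
    IntegrableOn (fun t => ‖Bc (u t) (u t) k‖ ^ 2) (Ioc 0 T) := by
  refine (h.integrableOn_sobolevSq_Bc hθ hu).mono'
    ((h.aestronglyMeasurable_Bc_apply hθ k).norm.pow 2) ?_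
  filter_upwards [h.ae_hasSobolev_Bc hu] with t hmem
  rw [Real.norm_of_nonneg (sq_nonneg _)]
  exact hmem.sq_norm_le k

lemma summable_transportModeSq (h : IsNSSol ν f T θ u) (hθ : HasSobolev 1 θ)
    (hu : HasSobolevBound T (n + 2) K u) :
    Summable fun k : Freq => waveNum k.1 ^ (2 * (n + 2)) * transportModeSq T u k := by
  have hsum := hasSum_integral_of_integrable_tsum_norm (μ := volume.restrict (Ioc 0 T))
    (F := fun (k : Freq) t => waveNum k.1 ^ (2 * (n + 2)) * ‖Bc (u t) (u t) k‖ ^ 2)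
    (fun k => ((h.aestronglyMeasurable_Bc_apply hθ k).norm.pow 2).const_mul _)
    ((h.ae_hasSobolev_Bc hu).mono fun t ht => Summable.norm ht) ?_
  · simpa only [integral_const_mul, transportModeSq] using hsum.summable
  · simpa only [Real.norm_of_nonneg (waveNum_pow_mul_sq_nonneg _ _ _), sobolevSq, IntegrableOn]
      using h.integrableOn_sobolevSq_Bc hθ hu

lemma sq_norm_apply_le_stokesMajorant (h : IsNSSol ν f T θ u) (hν : 0 < ν) (hθ : HasSobolev 1 θ)
    (hu : HasSobolevBound T (n + 2) K u) (hs : 0 ≤ s) (hst : s ≤ t) (ht : t ≤ T) (k : Freq) :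
    ‖u t k‖ ^ 2 ≤ stokesMajorant ν f T u s k :=
  (sq_norm_le_sub_add (u t k) (stokesSol ν f k)).trans <| by
    have hgrowth := h.sq_norm_sub_stokesSol_le hν hθ
      (h.integrableOn_sq_norm_Bc_apply hθ hu k) hs hst ht
    unfold stokesMajorant
    gcongr

lemma summable_waveNum_pow_mul_stokesMajorant {m : ℕ} (h : IsNSSol ν f T θ u) (hν : 0 < ν)
    (hf : HasSobolev (n + 1) f) (hθ : HasSobolev 1 θ) (hu : HasSobolevBound T (n + 2) K u)
    (hm : m ≤ n + 3) (hs : HasSobolev m (u s)) :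
    Summable fun k : Freq => waveNum k.1 ^ (2 * m) * stokesMajorant ν f T u s k := by
  have hstokes : HasSobolev m (stokesSol ν f) := hf.stokesSol.mono hm
  have htransport : Summable fun k : Freq =>
      waveNum k.1 ^ (2 * m) * (2 / (ν * lam k) * transportModeSq T u k) := by
    refine .of_nonneg_of_le (fun k => ?_) (fun k => ?_)
      ((h.summable_transportModeSq hθ hu).mul_left (2 / ν))
    · have hlam := lam_pos k
      have hI := transportModeSq_nonneg T u k
      have hω := waveNum_nonneg k.1
      positivity
    · have hω := waveNum_freq_pos k
      calc waveNum k.1 ^ (2 * m) * (2 / (ν * lam k) * transportModeSq T u k)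
        _ ≤ waveNum k.1 ^ (2 * (n + 3)) * (2 / (ν * lam k) * transportModeSq T u k) := by
            have hlam := lam_pos k
            have hI := transportModeSq_nonneg T u k
            gcongr
            exact one_le_waveNum k.2
        _ = 2 / ν * (waveNum k.1 ^ (2 * (n + 2)) * transportModeSq T u k) := by
            rw [lam_eq_waveNum_sq, show 2 * (n + 3) = 2 * (n + 2) + 2 by ring, pow_add]
            field_simp
  refine (((Summable.add (hs.sub hstokes) htransport).add hstokes).mul_left 2).congr fun k => ?_
  rw [stokesMajorant, Pi.sub_apply]
  ring

theorem hasSobolev_of_hasSobolevBound (h : IsNSSol ν f T θ u) (hν : 0 < ν)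
    (hf : HasSobolev (n + 1) f) (hθ : HasSobolev 1 θ) (hu : HasSobolevBound T (n + 2) K u)
    (ht : t ∈ Ioc 0 T) : HasSobolev (n + 3) (u t) := by
  obtain ⟨s, hs, hmem⟩ : ∃ s ∈ Ioo 0 t, HasSobolev (n + 3) (u s) := by
    have hae : ∀ᵐ s ∂volume.restrict (Ioo 0 t), HasSobolev (n + 3) (u s) :=
      ae_mono (Measure.restrict_mono
        (Ioo_subset_Ioc_self.trans (Ioc_subset_Ioc_right ht.2)) le_rfl) hu.ae_hasSobolev
    have hne : (ae (volume.restrict (Ioo 0 t))).NeBot := by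
      rw [ae_restrict_neBot, Real.volume_Ioo, sub_zero]
      exact (ENNReal.ofReal_pos.mpr ht.1).ne'
    exact ((ae_restrict_mem measurableSet_Ioo).and hae).exists
  exact .of_nonneg_of_le (waveNum_pow_mul_sq_nonneg (n + 3) (u t))
    (fun k => mul_le_mul_of_nonneg_left
      (h.sq_norm_apply_le_stokesMajorant hν hθ hu hs.1.le hs.2.le ht.2 k)
      (pow_nonneg (waveNum_nonneg k.1) _))
    (h.summable_waveNum_pow_mul_stokesMajorant hν hf hθ hu le_rfl hmem)

theorem tendsto_sobolevSq_of_hasSobolevBound (h : IsNSSol ν f T θ u) (hν : 0 < ν)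
    (hf : HasSobolev (n + 1) f) (hθ : HasSobolev (n + 2) θ) (hu : HasSobolevBound T (n + 2) K u)
    (ht : t ∈ Icc 0 T) :
    Filter.Tendsto (fun s => sobolevSq (n + 2) (u s - u t)) (nhdsWithin t (Icc 0 T))
      (nhds 0) := by
  have hθ1 : HasSobolev 1 θ := hθ.mono (by omega)
  have hmajorant (s : ℝ) (hs : s ∈ Icc 0 T) (k : Freq) : waveNum k.1 ^ (2 * (n + 2)) * ‖u s k‖ ^ 2
      ≤ waveNum k.1 ^ (2 * (n + 2)) * stokesMajorant ν f T u 0 k :=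
    mul_le_mul_of_nonneg_left
      (h.sq_norm_apply_le_stokesMajorant hν hθ1 hu le_rfl hs.1 hs.2 k)
      (pow_nonneg (waveNum_nonneg k.1) _)
  have hsummable := h.summable_waveNum_pow_mul_stokesMajorant (s := 0) (m := n + 2) hν hf hθ1 hu
    (by omega) (by rwa [h.init])
  suffices hlim : Filter.Tendsto (fun s => sobolevSq (n + 2) (u s - u t))
      (nhdsWithin t (Icc 0 T)) (nhds (∑' _ : Freq, 0)) by simpa only [tsum_zero] using hlim
  refine tendsto_tsum_of_dominated_convergence (hsummable.mul_left 4) (fun k => ?_) ?_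
  · have hcont : ContinuousWithinAt
        (fun s => waveNum k.1 ^ (2 * (n + 2)) * ‖(u s - u t) k‖ ^ 2) (Icc 0 T) t :=
      continuousWithinAt_const.mul
        (((h.continuousOn_apply hθ1 k t ht).sub continuousWithinAt_const).norm.pow 2)
    simpa only [ContinuousWithinAt, sub_self, Pi.zero_apply, norm_zero, ne_eq, OfNat.ofNat_ne_zero,
      not_false_eq_true, zero_pow, mul_zero] using hcont
  · filter_upwards [self_mem_nhdsWithin] with s hs k
    rw [Real.norm_of_nonneg (waveNum_pow_mul_sq_nonneg _ _ _)]
    linarith [waveNum_pow_mul_sq_sub_le (n + 2) (u s) (u t) k, hmajorant s hs k, hmajorant t ht k]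

theorem contH_and_memL2H (h : IsNSSol ν f T θ u) (hT : 0 ≤ T) (hν : 0 < ν) {b : ℕ}
    (hf : HasSobolev b f) (hθ : HasSobolev (b + 1) θ) :
    ContH ((b + 1 : ℕ) : ℝ) T u ∧ MemL2H ((b + 2 : ℕ) : ℝ) T u := by
  cases b with
  | zero =>
    rw [zero_add, zero_add, Nat.cast_one, Nat.cast_ofNat]
    exact ⟨h.contH1, h.memL2H2⟩
  | succ n =>
    obtain ⟨C, -, hbound⟩ := exists_hasSobolevBound hT hν (sobolevSq_nonneg (n + 1) f) (n + 1)
    have hu := hbound hf le_rfl hθ h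
    refine ⟨contH_natCast_iff.mpr fun t ht => h.tendsto_sobolevSq_of_hasSobolevBound hν hf hθ hu ht,
      fun t ht => ⟨h.real t (Ioc_subset_Icc_self ht), finH_natCast_iff.mpr
        (h.hasSobolev_of_hasSobolevBound hν hf (hθ.mono (by omega)) hu ht)⟩, ?_⟩
    simpa only [hSq_natCast] using hu.integrableOn

end IsNSSol

lemma hN_natCast_zpow_two_mul (n m : ℕ) (c : Coef) :
    hN n c ^ (2 * (m : ℤ)) = sobolevSq n c ^ m := by
  rw [zpow_mul, zpow_natCast, zpow_ofNat, hN_natCast, Real.sq_sqrt (sobolevSq_nonneg n c)]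

/-- Proposition `PropNSBound`. Higher-order Sobolev bounds:
for an integer `a ≥ 1` and `f ∈ Ḣ^{a−1}_⋄`, every solution with
`θ ∈ Ḣ^a_⋄` satisfies `u_θ ∈ C([0,T], Ḣ^a_⋄) ∩ L²([0,T], Ḣ^{a+1}_⋄)`, and
there is `C = C(T,ν,a,‖f‖_{Ḣ^{a−1}}) > 0` with
`sup_{0≤t≤T} ‖u_θ(t)‖²_{Ḣ^a} + ∫₀ᵀ ‖u_θ(t)‖²_{Ḣ^{a+1}} dt ≤ C (1 + ‖θ‖^{2a}_{Ḣ^a})`. -/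
theorem statement2 (T ν : ℝ) (hT : 0 < T) (hν : 0 < ν) (a : ℤ) (ha : 1 ≤ a)
    (f : Coef) (hf : MemH ((a : ℝ) - 1) f) :
    (∀ (θ : Coef) (u : ℝ → Coef), MemH (a : ℝ) θ → IsNSSol ν f T θ u →
      ContH (a : ℝ) T u ∧ MemL2H ((a : ℝ) + 1) T u) ∧
    (∃ C : ℝ, 0 < C ∧
      ∀ (θ : Coef) (u : ℝ → Coef), MemH (a : ℝ) θ → IsNSSol ν f T θ u →
        IntervalIntegrable (fun t => hSq ((a : ℝ) + 1) (u t)) volume 0 T ∧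
        ∀ t ∈ Icc (0:ℝ) T,
          hSq (a : ℝ) (u t) + (∫ s in (0:ℝ)..T, hSq ((a : ℝ) + 1) (u s)) ≤
            C * (1 + hN (a : ℝ) θ ^ (2 * a))) := by
  obtain ⟨b, rfl⟩ : ∃ b : ℕ, a = ((b + 1 : ℕ) : ℤ) := ⟨(a - 1).toNat, by omega⟩
  have hcast : (((b + 1 : ℕ) : ℤ) : ℝ) = ((b + 1 : ℕ) : ℝ) := Int.cast_natCast _
  have hpred : ((b + 1 : ℕ) : ℝ) - 1 = b := by push_cast; ring
  have hsucc : ((b + 1 : ℕ) : ℝ) + 1 = ((b + 2 : ℕ) : ℝ) := by push_cast; ring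
  rw [hcast, hpred] at hf
  simp only [hcast, hsucc, hSq_natCast, hN_natCast_zpow_two_mul]
  have hf' := finH_natCast_iff.mp hf.2
  refine ⟨fun θ u hθ h => h.contH_and_memL2H hT.le hν hf' (finH_natCast_iff.mp hθ.2), ?_⟩
  obtain ⟨C, hC, hbound⟩ := exists_hasSobolevBound hT.le hν (sobolevSq_nonneg b f) b
  refine ⟨2 * C + 1, by positivity, fun θ u hθ h => ?_⟩
  have hu := hbound hf' le_rfl (finH_natCast_iff.mp hθ.2) h
  refine ⟨(intervalIntegrable_iff_integrableOn_Ioc_of_le hT.le).mpr hu.integrableOn,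
    fun t ht => ?_⟩
  rw [intervalIntegral.integral_of_le hT.le]
  linarith [hu.sobolevSq_le t ht, hu.integral_le,
    pow_nonneg (sobolevSq_nonneg (b + 1) θ) (b + 1)]

end NS2D
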